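/- Let d ≥ 3 be an integer and let 𝒞 ∈ (0,1] be a constant such that for all nonnegative u in D^{1,2}(ℝ^d), with q = (d+2)/(d−2), S_d ‖u^q‖_{2d/(d+2)}² − ∫ u^q (−Δ)^{−1}(u^q) dx ≤ 𝒞 S_d ‖u‖_{2^*}^{8/(d−2)} [ S_d ‖∇u‖_2² − ‖u‖_{2^*}² ]. Define φ(x) = √(𝒞² + 2𝒞x) − 𝒞 for x ≥ 0, and for v ≥ 0 set J_d[v] = ∫ v^{2d/(d+2)} dx and H_d[v] = ∫ v (−Δ)^{−1} v dx − S_d ‖v‖_{2d/(d+2)}². Then for every nonnegative u in D^{1,2}(ℝ^d), with v = u^{(d+2)/(d−2)}, one has 0 ≤ H_d[v] + S_d J_d[v]^{1+2/d} φ( J_d[v]^{2/d − 1} [ S_d ‖∇u‖_2² − ‖u‖_{2^*}² ] ). -/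

import Mathlib

open MeasureTheory Real

noncomputable section

/-- Surface area of the unit sphere `𝕊^{d-1} ⊆ ℝ^d`. -/
def sphereArea (d : ℕ) : ℝ := 2 * Real.pi ^ ((d : ℝ) / 2) / Real.Gamma ((d : ℝ) / 2)

/-- Green function of `-Δ` on `ℝ^d`, `d ≥ 3`: `G_d(x) = |x|^{2-d} / ((d-2)|𝕊^{d-1}|)`. -/
def greenKernel (d : ℕ) (x : EuclideanSpace ℝ (Fin d)) : ℝ :=
  ‖x‖ ^ ((2 : ℝ) - d) / (((d : ℝ) - 2) * sphereArea d)

/-- `(−Δ)⁻¹ v`, the convolution of `v` with the Green function of `-Δ` on `ℝ^d`. -/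
def invLap (d : ℕ) (v : EuclideanSpace ℝ (Fin d) → ℝ) (x : EuclideanSpace ℝ (Fin d)) : ℝ :=
  ∫ y, greenKernel d (x - y) * v y

/-- The Aubin–Talenti (optimal Sobolev) constant
`S_d = (1/(π d (d−2))) (Γ(d)/Γ(d/2))^{2/d}`. -/
def sobolevConst (d : ℕ) : ℝ :=
  1 / (Real.pi * d * ((d : ℝ) - 2)) *
    (Real.Gamma (d : ℝ) / Real.Gamma ((d : ℝ) / 2)) ^ ((2 : ℝ) / (d : ℝ))

/-- Membership in `D^{1,2}(ℝ^d)`: a (weakly) differentiable function with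
`∇u ∈ L²` and `u ∈ L^{2*}`, `2* = 2d/(d-2)`. -/
def MemD12 (d : ℕ) (u : EuclideanSpace ℝ (Fin d) → ℝ) : Prop :=
  Differentiable ℝ u ∧
  Integrable (fun x => ‖gradient u x‖ ^ 2) ∧
  Integrable (fun x => |u x| ^ (2 * (d : ℝ) / ((d : ℝ) - 2)))

/-- The `L^p` norm of `u`, written with real exponents: `(∫ |u|^p)^{1/p}`. -/
def lpNorm' {d : ℕ} (p : ℝ) (u : EuclideanSpace ℝ (Fin d) → ℝ) : ℝ :=
  (∫ x, |u x| ^ p) ^ (1 / p)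

/-- The Laplacian `Δu = ∑ ∂²u/∂x_i²`. -/
def lap (d : ℕ) (u : EuclideanSpace ℝ (Fin d) → ℝ) (x : EuclideanSpace ℝ (Fin d)) : ℝ :=
  ∑ i : Fin d, iteratedFDeriv ℝ 2 u x ![EuclideanSpace.single i 1, EuclideanSpace.single i 1]

/-- `J_d[v] = ∫ v^{2d/(d+2)}`. -/
def Jfun (d : ℕ) (v : EuclideanSpace ℝ (Fin d) → ℝ) : ℝ :=
  ∫ x, v x ^ (2 * (d : ℝ) / ((d : ℝ) + 2))

/-- `H_d[v] = ∫ v (−Δ)⁻¹ v − S_d ‖v‖_{2d/(d+2)}²`. -/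
def Hfun (d : ℕ) (v : EuclideanSpace ℝ (Fin d) → ℝ) : ℝ :=
  (∫ x, v x * invLap d v x) -
    sobolevConst d * lpNorm' (2 * (d : ℝ) / ((d : ℝ) + 2)) v ^ (2 : ℝ)



namespace ISP

open Set ENNReal in
lemma bm_compact {K₁ K₂ D : Set ℝ} (h₁ : IsCompact K₁) (h₂ : IsCompact K₂) (n₁ : K₁.Nonempty)
    (n₂ : K₂.Nonempty) (hD : ∀ x ∈ K₁, ∀ y ∈ K₂, x + y ∈ D) :
    volume K₁ + volume K₂ ≤ volume D := by
  obtain ⟨a, ha, hamax⟩ := h₁.exists_isGreatest n₁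
  obtain ⟨b, hb, hbmin⟩ := h₂.exists_isLeast n₂
  have e1 : volume ((fun x => x + b) '' K₁) = volume K₁ := by
    simp [Set.image_add_right]
  have e2 : volume ((fun x => a + x) '' K₂) = volume K₂ := by
    simp [Set.image_add_left]
  have m2 : MeasurableSet ((fun x => a + x) '' K₂) :=
    (h₂.image (by fun_prop)).isClosed.measurableSet
  have hsub : (fun x => x + b) '' K₁ ∪ (fun x => a + x) '' K₂ ⊆ D := by
    rintro z (⟨x, hx, rfl⟩ | ⟨x, hx, rfl⟩)
    · exact hD _ hx _ hb
    · exact hD _ ha _ hx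
  have hIntg : (fun x => x + b) '' K₁ ∩ (fun x => a + x) '' K₂ ⊆ {a + b} := by
    rintro z ⟨⟨x, hx, rfl⟩, ⟨y, hy, hxy⟩⟩
    have := hamax hx
    have := hbmin hy
    simp only [Set.mem_singleton_iff] at *
    linarith
  have h0 : volume ((fun x => x + b) '' K₁ ∩ (fun x => a + x) '' K₂) = 0 :=
    measure_mono_null hIntg (by simp)
  have := measure_union_add_inter (μ := volume) ((fun x => x + b) '' K₁) m2
  rw [h0, e1, e2, add_zero] at this
  rw [← this]
  exact measure_mono hsub

lemma bm_meas {A B D : Set ℝ} (hA : MeasurableSet A) (hB : MeasurableSet B) (nA : A.Nonempty)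
    (nB : B.Nonempty) (hD : ∀ x ∈ A, ∀ y ∈ B, x + y ∈ D) :
    volume A + volume B ≤ volume D := by
  obtain ⟨a, ha⟩ := nA
  obtain ⟨b, hb⟩ := nB
  rw [hA.measure_eq_iSup_isCompact, hB.measure_eq_iSup_isCompact]
  refine ENNReal.biSup_add_biSup_le' (p := fun K => K ⊆ A) (q := fun K => K ⊆ B) ⟨∅, by simp⟩ ⟨∅, by simp⟩ ?_
  intro K hK K' hK'
  by_cases c1 : IsCompact K <;> by_cases c2 : IsCompact K' <;> simp [c1, c2]
  · calc volume K + volume K' ≤ volume (insert a K) + volume (insert b K') :=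
        add_le_add (measure_mono (Set.subset_insert _ _)) (measure_mono (Set.subset_insert _ _))
      _ ≤ _ := bm_compact (c1.insert a) (c2.insert b) (Set.insert_nonempty _ _) (Set.insert_nonempty _ _)
        (fun x hx y hy => hD _ (by rcases hx with rfl | hx; exacts [ha, hK hx]) _ (by rcases hy with rfl | hy; exacts [hb, hK' hy]))
  · calc volume K  ≤ volume (insert a K) + volume (insert b (∅ : Set ℝ)) :=
        le_add_right (measure_mono (Set.subset_insert _ _))
      _ ≤ _ := bm_compact (c1.insert a) (isCompact_empty.insert b) (Set.insert_nonempty _ _) (Set.insert_nonempty _ _)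
        (fun x hx y hy => hD _ (by rcases hx with rfl | hx; exacts [ha, hK hx]) _ (by rcases hy with rfl | hy; exacts [hb, hy.elim]))
  · calc volume K'  ≤ volume (insert a (∅ : Set ℝ)) + volume (insert b K') :=
        le_add_left (measure_mono (Set.subset_insert _ _))
      _ ≤ _ := bm_compact (isCompact_empty.insert a) (c2.insert b) (Set.insert_nonempty _ _) (Set.insert_nonempty _ _)
        (fun x hx y hy => hD _ (by rcases hx with rfl | hx; exacts [ha, hx.elim]) _ (by rcases hy with rfl | hy; exacts [hb, hK' hy]))

/-- one-dimensional inequality for functions with equal finite suprema -/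
lemma one_dim_min {u v w : ℝ → ENNReal} (hu : Measurable u) (hv : Measurable v) (hw : Measurable w)
    (hsup : ⨆ x, u x = ⨆ x, v x) (hfin : ⨆ x, u x ≠ ⊤)
    (h : ∀ x y, min (u x) (v y) ≤ w (x + y)) :
    (∫⁻ x, u x) + (∫⁻ x, v x) ≤ ∫⁻ x, w x := by
  set A := ⨆ x, u x with hA
  have huA : ∀ x, u x ≤ A := fun x => le_iSup u x
  have hvA : ∀ x, v x ≤ A := fun x => hsup ▸ le_iSup v x
  have key : ∀ f : ℝ → ENNReal, Measurable f → (∀ x, f x ≤ A) →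
      ∫⁻ x, f x = ∫⁻ t in Set.Ioi (0:ℝ), volume {x | ENNReal.ofReal t < f x} := by
    intro f hf hfA
    have hf' : ∀ x, f x ≠ ⊤ := fun x => ne_top_of_le_ne_top hfin (hfA x)
    have := lintegral_eq_lintegral_meas_lt (volume : Measure ℝ) (f := fun x => (f x).toReal)
      (Filter.Eventually.of_forall fun x => ENNReal.toReal_nonneg) hf.ennreal_toReal.aemeasurable
    simp only [ENNReal.ofReal_toReal (hf' _)] at this
    rw [this]
    refine setLIntegral_congr_fun measurableSet_Ioi ?_
    intro t ht
    simp only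
    congr 1
    ext x
    simp only [Set.mem_ofPred_eq]
    rw [ENNReal.ofReal_lt_iff_lt_toReal (le_of_lt ht) (hf' x)]
  have hw' : ∫⁻ x, min (w x) A ≤ ∫⁻ x, w x := lintegral_mono fun x => min_le_left _ _
  refine le_trans ?_ hw'
  rw [key u hu huA, key v hv hvA, key _ (hw.min measurable_const) (fun x => min_le_right _ _)]
  have hmon : ∀ f : ℝ → ENNReal, Measurable fun t : ℝ => volume {x | ENNReal.ofReal t < f x} := by
    intro f
    have : Antitone fun t : ℝ => volume {x | ENNReal.ofReal t < f x} := fun s t hst =>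
      measure_mono fun x hx => lt_of_le_of_lt (ENNReal.ofReal_le_ofReal hst) hx
    exact this.measurable
  rw [← lintegral_add_left (hmon u)]
  refine lintegral_mono fun t => ?_
  by_cases ht : ENNReal.ofReal t < A
  · have n1 : ∃ x, ENNReal.ofReal t < u x := lt_iSup_iff.mp ht
    have n2 : ∃ x, ENNReal.ofReal t < v x := lt_iSup_iff.mp (hsup ▸ ht)
    refine bm_meas (measurableSet_lt measurable_const hu) (measurableSet_lt measurable_const hv) n1 n2 ?_
    intro x hx y hy
    exact lt_min (lt_of_lt_of_le (lt_min hx hy) (h x y)) ht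
  · have e1 : {x | ENNReal.ofReal t < u x} = ∅ := by
      ext x; simpa using (huA x).trans (not_lt.mp ht)
    have e2 : {x | ENNReal.ofReal t < v x} = ∅ := by
      ext x; simpa using (hvA x).trans (not_lt.mp ht)
    simp [e1, e2]

end ISP


namespace ISP

/-- harmonic-type means -/
noncomputable def Mn (k : ℕ) (a b : ENNReal) : ENNReal :=
  if k = 0 then min a b else (a ^ (-(1 / (k : ℝ))) + b ^ (-(1 / (k : ℝ)))) ^ (-(k : ℝ))

lemma rpow_neg_anti {a b : ENNReal} (h : a ≤ b) {r : ℝ} (hr : 0 ≤ r) : b ^ (-r) ≤ a ^ (-r) := by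
  rw [ENNReal.rpow_neg, ENNReal.rpow_neg, ENNReal.inv_le_inv]
  exact ENNReal.rpow_le_rpow h hr

lemma Mn_mono (k : ℕ) {a b a' b' : ENNReal} (h1 : a ≤ a') (h2 : b ≤ b') : Mn k a b ≤ Mn k a' b' := by
  unfold Mn
  split_ifs with h
  · exact min_le_min h1 h2
  · exact rpow_neg_anti (add_le_add (rpow_neg_anti h1 (by positivity)) (rpow_neg_anti h2 (by positivity)))
      (by positivity)

lemma Mn_zero_left (k : ℕ) (b : ENNReal) : Mn k 0 b = 0 := by
  unfold Mn
  split_ifs with h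
  · simp
  · have hk : (0:ℝ) < k := by positivity
    rw [ENNReal.zero_rpow_of_neg (by simpa using hk), top_add, ENNReal.top_rpow_of_neg (by linarith)]

lemma Mn_comm (k : ℕ) (a b : ENNReal) : Mn k a b = Mn k b a := by
  unfold Mn; rw [min_comm, add_comm]

lemma Mn_zero_right (k : ℕ) (b : ENNReal) : Mn k b 0 = 0 := by
  rw [Mn_comm, Mn_zero_left]

lemma Mn_continuous (k : ℕ) : Continuous fun p : ENNReal × ENNReal => Mn k p.1 p.2 := by
  unfold Mn
  split_ifs with h
  · exact continuous_fst.min continuous_snd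
  · exact ENNReal.continuous_rpow_const.comp ((ENNReal.continuous_rpow_const.comp continuous_fst).add
      (ENNReal.continuous_rpow_const.comp continuous_snd))

lemma ofReal_pow_inv_rpow {p : ℝ} (hp : 0 < p) {k : ℕ} (hk : k ≠ 0) :
    ENNReal.ofReal ((p ^ k)⁻¹) ^ (-(1 / (k : ℝ))) = ENNReal.ofReal p := by
  rw [ENNReal.ofReal_rpow_of_pos (by positivity), ← Real.rpow_natCast, ← Real.rpow_neg hp.le,
    ← Real.rpow_mul hp.le]
  congr 1
  have : (k:ℝ) ≠ 0 := by positivity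
  rw [show -(k:ℝ) * -(1/(k:ℝ)) = 1 by field_simp, Real.rpow_one]

lemma Mn_ofReal {p r : ℝ} (hp : 0 < p) (hr : 0 < r) {k : ℕ} (hk : k ≠ 0) :
    Mn k (ENNReal.ofReal ((p ^ k)⁻¹)) (ENNReal.ofReal ((r ^ k)⁻¹)) =
      ENNReal.ofReal (((p + r) ^ k)⁻¹) := by
  unfold Mn
  rw [if_neg hk, ofReal_pow_inv_rpow hp hk, ofReal_pow_inv_rpow hr hk, ← ENNReal.ofReal_add hp.le hr.le,
    ENNReal.ofReal_rpow_of_pos (by positivity), Real.rpow_neg (by positivity), Real.rpow_natCast]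

lemma exists_pow_inv {A : ENNReal} (h0 : A ≠ 0) (h1 : A ≠ ⊤) {k : ℕ} (hk : k ≠ 0) :
    ∃ p : ℝ, 0 < p ∧ A = ENNReal.ofReal ((p ^ k)⁻¹) := by
  have hA : 0 < A.toReal := ENNReal.toReal_pos h0 h1
  refine ⟨A.toReal ^ (-(1 / (k:ℝ))), by positivity, ?_⟩
  have : (k:ℝ) ≠ 0 := by positivity
  rw [← Real.rpow_natCast, ← Real.rpow_neg (by positivity), ← Real.rpow_mul hA.le,
    show -(1/(k:ℝ)) * -(k:ℝ) = 1 by field_simp, Real.rpow_one, ENNReal.ofReal_toReal h1]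

lemma Mn_smul {k : ℕ} (hk : k ≠ 0) {s : ENNReal} (h0 : s ≠ 0) (h1 : s ≠ ⊤) {A B : ENNReal}
    (hA0 : A ≠ 0) (hA1 : A ≠ ⊤) (hB0 : B ≠ 0) (hB1 : B ≠ ⊤) :
    Mn k (s * A) (s * B) = s * Mn k A B := by
  obtain ⟨p, hp, rfl⟩ := exists_pow_inv hA0 hA1 hk
  obtain ⟨r, hr, rfl⟩ := exists_pow_inv hB0 hB1 hk
  obtain ⟨t, ht, rfl⟩ := exists_pow_inv h0 h1 hk
  rw [← ENNReal.ofReal_mul (by positivity), ← ENNReal.ofReal_mul (by positivity), ← mul_inv, ← mul_inv,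
    ← mul_pow, ← mul_pow, Mn_ofReal (by positivity) (by positivity) hk, Mn_ofReal hp hr hk,
    ← ENNReal.ofReal_mul (by positivity), ← mul_inv, ← mul_pow, mul_add]

lemma radon {p r ξ η : ℝ} (hp : 0 < p) (hr : 0 < r) (hξ : 0 < ξ) (hη : 0 < η) (k : ℕ) :
    ((ξ + η) ^ k)⁻¹ ≤ ((p + r) ^ (k+1))⁻¹ * ((ξ ^ k)⁻¹ / (p ^ (k+1))⁻¹ + (η ^ k)⁻¹ / (r ^ (k+1))⁻¹) := by
  have h := (convexOn_pow (𝕜 := ℝ) (k+1)).2 (show p / ξ ∈ Set.Ici 0 by simp; positivity)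
    (show r / η ∈ Set.Ici 0 by simp; positivity)
    (show 0 ≤ ξ / (ξ + η) by positivity) (show 0 ≤ η / (ξ + η) by positivity) (by field_simp)
  simp only [smul_eq_mul] at h
  have e1 : ξ / (ξ + η) * (p / ξ) + η / (ξ + η) * (r / η) = (p + r) / (ξ + η) := by field_simp
  rw [e1] at h
  have e2 : ξ / (ξ + η) * (p / ξ)^(k+1) + η / (ξ + η) * (r / η)^(k+1)
      = (p^(k+1) / ξ^k + r^(k+1)/η^k) / (ξ + η) := by
    rw [div_pow, div_pow, pow_succ ξ, pow_succ η]; field_simp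
  rw [e2, div_pow] at h
  have e3 : (p + r) ^ (k + 1) / (ξ + η) ^ (k + 1) = ((p+r)^(k+1) / (ξ+η)^k) / (ξ+η) := by
    rw [pow_succ (ξ + η)]; field_simp
  rw [e3, div_le_div_iff_of_pos_right (by positivity)] at h
  have e4 : (ξ ^ k)⁻¹ / (p ^ (k+1))⁻¹ + (η ^ k)⁻¹ / (r ^ (k+1))⁻¹ = p^(k+1) / ξ^k + r^(k+1)/η^k := by
    field_simp
  rw [e4, inv_mul_eq_div, le_div_iff₀ (by positivity), inv_mul_eq_div]
  exact h

lemma Mn_numeric {A B U V : ENNReal} (hA0 : A ≠ 0) (hA1 : A ≠ ⊤) (hB0 : B ≠ 0) (hB1 : B ≠ ⊤) (k : ℕ) :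
    Mn k U V ≤ Mn (k+1) A B * (U / A + V / B) := by
  by_cases hU0 : U = 0
  · simp [hU0, Mn_zero_left]
  by_cases hV0 : V = 0
  · simp [hV0, Mn_zero_right]
  obtain ⟨p, hp, rfl⟩ := exists_pow_inv hA0 hA1 (Nat.succ_ne_zero k)
  obtain ⟨r, hr, rfl⟩ := exists_pow_inv hB0 hB1 (Nat.succ_ne_zero k)
  rw [Mn_ofReal hp hr (Nat.succ_ne_zero k)]
  by_cases hU : U = ⊤
  · rw [hU, ENNReal.top_div_of_ne_top hA1, top_add, ENNReal.mul_top (by simp; positivity)]; exact le_top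
  by_cases hV : V = ⊤
  · rw [hV, ENNReal.top_div_of_ne_top hB1, add_top, ENNReal.mul_top (by simp; positivity)]; exact le_top
  rcases Nat.eq_zero_or_pos k with rfl | hk
  · have hU' := ENNReal.toReal_pos hU0 hU
    have hV' := ENNReal.toReal_pos hV0 hV
    rw [← ENNReal.ofReal_toReal hU, ← ENNReal.ofReal_toReal hV]
    rw [← ENNReal.ofReal_div_of_pos (by positivity), ← ENNReal.ofReal_div_of_pos (by positivity),
      ← ENNReal.ofReal_add (by positivity) (by positivity), ← ENNReal.ofReal_mul (by positivity)]
    simp only [Mn, if_true]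
    rw [← ENNReal.ofReal_min]
    apply ENNReal.ofReal_le_ofReal
    have h1 := min_le_left U.toReal V.toReal
    have h2 := min_le_right U.toReal V.toReal
    simp only [Nat.succ_eq_add_one, zero_add, pow_one, div_inv_eq_mul]
    rw [inv_mul_eq_div, le_div_iff₀ (by positivity)]
    nlinarith
  · obtain ⟨ξ, hξ, rfl⟩ := exists_pow_inv hU0 hU hk.ne'
    obtain ⟨η, hη, rfl⟩ := exists_pow_inv hV0 hV hk.ne'
    rw [Mn_ofReal hξ hη hk.ne']
    rw [← ENNReal.ofReal_div_of_pos (by positivity), ← ENNReal.ofReal_div_of_pos (by positivity),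
      ← ENNReal.ofReal_add (by positivity) (by positivity), ← ENNReal.ofReal_mul (by positivity)]
    exact ENNReal.ofReal_le_ofReal (radon hp hr hξ hη k)

lemma one_dim_bdd (k : ℕ) {u v w : ℝ → ENNReal} (hu : Measurable u) (hv : Measurable v)
    (hw : Measurable w) (hA1 : ⨆ x, u x ≠ ⊤) (hB1 : ⨆ x, v x ≠ ⊤)
    (h : ∀ x y, Mn (k+1) (u x) (v y) ≤ w (x + y)) :
    Mn k (∫⁻ x, u x) (∫⁻ x, v x) ≤ ∫⁻ x, w x := by
  set A := ⨆ x, u x with hA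
  set B := ⨆ x, v x with hB
  by_cases hA0 : A = 0
  · have : ∀ x, u x = 0 := fun x => le_antisymm (hA0 ▸ le_iSup u x) (by simp)
    simp [this, Mn_zero_left]
  by_cases hB0 : B = 0
  · have : ∀ x, v x = 0 := fun x => le_antisymm (hB0 ▸ le_iSup v x) (by simp)
    simp [this, Mn_zero_right]
  have hM : Mn (k+1) A B ≠ 0 ∧ Mn (k+1) A B ≠ ⊤ := by
    obtain ⟨p, hp, hp'⟩ := exists_pow_inv hA0 hA1 (Nat.succ_ne_zero k)
    obtain ⟨r, hr, hr'⟩ := exists_pow_inv hB0 hB1 (Nat.succ_ne_zero k)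
    rw [hp', hr', Mn_ofReal hp hr (Nat.succ_ne_zero k)]
    exact ⟨by simp; positivity, by simp⟩
  refine (Mn_numeric hA0 hA1 hB0 hB1 k).trans ?_
  have key := one_dim_min (u := fun x => u x / A) (v := fun x => v x / B)
    (w := fun x => w x / Mn (k+1) A B) (hu.div_const _) (hv.div_const _) (hw.div_const _)
    (by rw [← ENNReal.iSup_div, ← ENNReal.iSup_div, ← hA, ← hB, ENNReal.div_self hA0 hA1, ENNReal.div_self hB0 hB1])
    (by rw [← ENNReal.iSup_div, ← hA, ENNReal.div_self hA0 hA1]; simp)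
    (by
      intro x y
      set s := min (u x / A) (v y / B) with hs
      by_cases hs0 : s = 0
      · simp [hs0]
      have hs1 : s ≠ ⊤ := by
        refine ne_top_of_le_ne_top (b := u x / A) ?_ (min_le_left _ _)
        refine ENNReal.div_ne_top (ne_top_of_le_ne_top hA1 (le_iSup u x)) hA0
      rw [ENNReal.le_div_iff_mul_le (Or.inl hM.1) (Or.inl hM.2), ← Mn_smul (Nat.succ_ne_zero k) hs0 hs1 hA0 hA1 hB0 hB1]
      refine le_trans (Mn_mono _ ?_ ?_) (h x y)
      · rw [← ENNReal.le_div_iff_mul_le (Or.inl hA0) (Or.inl hA1)]; exact min_le_left _ _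
      · rw [← ENNReal.le_div_iff_mul_le (Or.inl hB0) (Or.inl hB1)]; exact min_le_right _ _)
  simp only [div_eq_mul_inv] at key ⊢
  rw [lintegral_mul_const _ hu, lintegral_mul_const _ hv, lintegral_mul_const _ hw] at key
  calc _ ≤ Mn (k+1) A B * ((∫⁻ x, w x) * (Mn (k+1) A B)⁻¹) := by gcongr
    _ = _ := by rw [mul_comm (∫⁻ x, w x), ← mul_assoc, ENNReal.mul_inv_cancel hM.1 hM.2, one_mul]

lemma lintegral_trunc {u : ℝ → ENNReal} (hu : Measurable u) :
    Filter.Tendsto (fun N : ℕ => ∫⁻ x, min (u x) N) Filter.atTop (nhds (∫⁻ x, u x)) := by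
  refine lintegral_tendsto_of_tendsto_of_monotone (fun N => (hu.min measurable_const).aemeasurable) ?_ ?_
  · exact Filter.Eventually.of_forall fun x a b hab => min_le_min le_rfl (by exact_mod_cast hab)
  · refine Filter.Eventually.of_forall fun x => ?_
    have : Filter.Tendsto (fun N : ℕ => min (u x) (N : ENNReal)) Filter.atTop (nhds (min (u x) ⊤)) :=
      tendsto_const_nhds.min ENNReal.tendsto_nat_nhds_top
    simpa using this

lemma one_dim_M (k : ℕ) {u v w : ℝ → ENNReal} (hu : Measurable u) (hv : Measurable v)
    (hw : Measurable w) (h : ∀ x y, Mn (k+1) (u x) (v y) ≤ w (x + y)) :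
    Mn k (∫⁻ x, u x) (∫⁻ x, v x) ≤ ∫⁻ x, w x := by
  have hb : ∀ N : ℕ, Mn k (∫⁻ x, min (u x) N) (∫⁻ x, min (v x) N) ≤ ∫⁻ x, w x := by
    intro N
    refine one_dim_bdd k (hu.min measurable_const) (hv.min measurable_const) hw ?_ ?_ ?_
    · exact ne_top_of_le_ne_top (ENNReal.natCast_ne_top N) (iSup_le fun x => min_le_right _ _)
    · exact ne_top_of_le_ne_top (ENNReal.natCast_ne_top N) (iSup_le fun x => min_le_right _ _)
    · exact fun x y => (Mn_mono _ (min_le_left _ _) (min_le_left _ _)).trans (h x y)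
  exact le_of_tendsto' (((Mn_continuous k).tendsto _).comp ((lintegral_trunc hu).prodMk_nhds (lintegral_trunc hv))) hb

lemma piFinSucc_symm {m : ℕ} (p : ℝ × (Fin m → ℝ)) :
    (MeasurableEquiv.piFinSuccAbove (fun _ : Fin (m + 1) => ℝ) 0).symm p = Fin.cons p.1 p.2 := by
  ext i
  refine Fin.cases ?_ (fun j => ?_) i
  · simp [MeasurableEquiv.piFinSuccAbove]
  · simp [MeasurableEquiv.piFinSuccAbove]

lemma measurable_slice {m : ℕ} {u : (Fin (m+1) → ℝ) → ENNReal} (hu : Measurable u) :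
    Measurable fun p : ℝ × (Fin m → ℝ) => u (Fin.cons p.1 p.2) := by
  have := hu.comp (MeasurableEquiv.piFinSuccAbove (fun _ : Fin (m + 1) => ℝ) 0).symm.measurable
  simpa only [Function.comp_def, piFinSucc_symm] using this

lemma lintegral_fin_succ {m : ℕ} {u : (Fin (m+1) → ℝ) → ENNReal} (hu : Measurable u) :
    ∫⁻ x, u x = ∫⁻ t : ℝ, ∫⁻ y : Fin m → ℝ, u (Fin.cons t y) := by
  have e := (volume_preserving_piFinSuccAbove (fun _ : Fin (m + 1) => ℝ) 0).symm
  rw [← e.lintegral_comp hu, Measure.volume_eq_prod]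
  simp only [piFinSucc_symm]
  rw [lintegral_prod _ (measurable_slice hu).aemeasurable]

lemma bbl (m : ℕ) : ∀ (k : ℕ) {u v w : (Fin m → ℝ) → ENNReal} (_ : Measurable u) (_ : Measurable v)
    (_ : Measurable w) (_ : ∀ x y, Mn (k+m) (u x) (v y) ≤ w (x + y)),
    Mn k (∫⁻ x, u x) (∫⁻ x, v x) ≤ ∫⁻ x, w x := by
  induction m with
  | zero =>
    intro k u v w hu hv hw h
    simp only [lintegral_unique]
    have := h default default
    rw [Subsingleton.elim (default + default : Fin 0 → ℝ) default] at this
    rw [Subsingleton.elim (@default (Fin 0 → ℝ) Pi.instInhabited) (@default (Fin 0 → ℝ) Unique.instInhabited)] at this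
    simpa only [MeasureTheory.volume_pi, Measure.pi_univ, Finset.univ_eq_empty, Finset.prod_empty, mul_one, add_zero] using this
  | succ m ih =>
    intro k u v w hu hv hw h
    rw [lintegral_fin_succ hu, lintegral_fin_succ hv, lintegral_fin_succ hw]
    refine one_dim_M k (measurable_slice hu).lintegral_prod_right' (measurable_slice hv).lintegral_prod_right'
      (measurable_slice hw).lintegral_prod_right' ?_
    intro s t
    refine ih (k+1) ((measurable_slice hu).comp measurable_prodMk_left)
      ((measurable_slice hv).comp measurable_prodMk_left) ((measurable_slice hw).comp measurable_prodMk_left) ?_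
    intro x y
    have := h (Fin.cons s x) (Fin.cons t y)
    have e : (Fin.cons s x + Fin.cons t y : Fin (m+1) → ℝ) = Fin.cons (s+t) (x+y) := by
      ext i; refine Fin.cases ?_ (fun j => ?_) i <;> simp
    rw [e] at this
    rw [show k + 1 + m = k + (m+1) by ring]
    exact this

/-- Bobkov–Ledoux functional inequality -/
lemma bobkov_ledoux (m : ℕ) {u v w : (Fin (m+1) → ℝ) → ENNReal} (hu : Measurable u) (hv : Measurable v)
    (hw : Measurable w) (h : ∀ x y, Mn m (u x) (v y) ≤ w (x + y))
    (hsup : ⨆ t : ℝ, ∫⁻ y : Fin m → ℝ, u (Fin.cons t y) = ⨆ t : ℝ, ∫⁻ y : Fin m → ℝ, v (Fin.cons t y))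
    (hfin : ⨆ t : ℝ, ∫⁻ y : Fin m → ℝ, u (Fin.cons t y) ≠ ⊤) :
    (∫⁻ x, u x) + (∫⁻ x, v x) ≤ ∫⁻ x, w x := by
  rw [lintegral_fin_succ hu, lintegral_fin_succ hv, lintegral_fin_succ hw]
  refine one_dim_min (measurable_slice hu).lintegral_prod_right' (measurable_slice hv).lintegral_prod_right'
      (measurable_slice hw).lintegral_prod_right' hsup hfin ?_
  intro s t
  have := bbl m 0 ((measurable_slice hu).comp (measurable_prodMk_left (x := s)))
      ((measurable_slice hv).comp (measurable_prodMk_left (x := t))) ((measurable_slice hw).comp (measurable_prodMk_left (x := s+t))) ?_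
  · simpa [Mn] using this
  intro x y
  have := h (Fin.cons s x) (Fin.cons t y)
  have e : (Fin.cons s x + Fin.cons t y : Fin (m+1) → ℝ) = Fin.cons (s+t) (x+y) := by
    ext i; refine Fin.cases ?_ (fun j => ?_) i <;> simp
  rw [e] at this
  simpa using this

end ISP


namespace ISP

/-- prepend a coordinate -/
noncomputable def econs {m : ℕ} (t : ℝ) (y : EuclideanSpace ℝ (Fin m)) : EuclideanSpace ℝ (Fin (m+1)) :=
  WithLp.toLp 2 (Fin.cons t (WithLp.ofLp y))

lemma norm_econs {m : ℕ} (t : ℝ) (y : EuclideanSpace ℝ (Fin m)) : ‖econs t y‖^2 = t^2 + ‖y‖^2 := by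
  rw [EuclideanSpace.norm_sq_eq, EuclideanSpace.norm_sq_eq, Fin.sum_univ_succ]
  simp [econs]

/-- slice supremum -/
noncomputable def sl {m : ℕ} (f : EuclideanSpace ℝ (Fin (m+1)) → ℝ) : ENNReal :=
  ⨆ t : ℝ, ∫⁻ y : EuclideanSpace ℝ (Fin m), ENNReal.ofReal ((f (econs t y) ^ m)⁻¹)

lemma lintegral_toLp {k : ℕ} (F : EuclideanSpace ℝ (Fin k) → ENNReal) :
    ∫⁻ y : Fin k → ℝ, F (WithLp.toLp 2 y) = ∫⁻ y, F y :=
  (PiLp.volume_preserving_toLp (Fin k)).lintegral_comp_emb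
    (MeasurableEquiv.toLp 2 (Fin k → ℝ)).measurableEmbedding F

lemma eucl_bl {m : ℕ} (hm : m ≠ 0) {f g h : EuclideanSpace ℝ (Fin (m+1)) → ℝ} (hf : Continuous f)
    (hg : Continuous g) (hh : Continuous h) (pf : ∀ x, 0 < f x) (pg : ∀ x, 0 < g x) (ph : ∀ x, 0 < h x)
    (hfgh : ∀ x y, h (x + y) ≤ f x + g y) (hsl : sl f = sl g) (hfin : sl f ≠ ⊤) :
    (∫⁻ x, ENNReal.ofReal ((f x ^ m)⁻¹)) + (∫⁻ x, ENNReal.ofReal ((g x ^ m)⁻¹)) ≤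
      ∫⁻ x, ENNReal.ofReal ((h x ^ m)⁻¹) := by
  have hc : Continuous (fun y : Fin (m+1) → ℝ => (WithLp.toLp 2 y : EuclideanSpace ℝ (Fin (m+1)))) :=
    PiLp.continuous_toLp 2 _
  have hs : ∀ f : EuclideanSpace ℝ (Fin (m+1)) → ℝ, sl f = ⨆ t : ℝ, ∫⁻ y : Fin m → ℝ,
      ENNReal.ofReal ((f (WithLp.toLp 2 (Fin.cons t y)) ^ m)⁻¹) := by
    intro f
    unfold sl
    congr 1
    ext t
    rw [← lintegral_toLp]
    rfl
  have hmeas : ∀ f : EuclideanSpace ℝ (Fin (m+1)) → ℝ, Continuous f →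
      Measurable fun y : Fin (m+1) → ℝ => ENNReal.ofReal ((f (WithLp.toLp 2 y) ^ m)⁻¹) := by
    intro f hf
    exact ((hf.comp hc).measurable.pow_const m).inv.ennreal_ofReal
  have := bobkov_ledoux m (hmeas f hf) (hmeas g hg) (hmeas h hh) ?_ ?_ ?_
  · rwa [lintegral_toLp (fun y => ENNReal.ofReal ((f y ^ m)⁻¹)), lintegral_toLp (fun y => ENNReal.ofReal ((g y ^ m)⁻¹)),
      lintegral_toLp (fun y => ENNReal.ofReal ((h y ^ m)⁻¹))] at this
  · intro x y
    rw [Mn_ofReal (pf _) (pg _) hm]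
    apply ENNReal.ofReal_le_ofReal
    have h1 := hfgh (WithLp.toLp 2 x) (WithLp.toLp 2 y)
    rw [← WithLp.toLp_add] at h1
    have h2 := ph (WithLp.toLp 2 (x+y))
    gcongr
  · rw [← hs, ← hs, hsl]
  · rw [← hs]; exact hfin

lemma japan {k p : ℕ} (h : k < 2 * p) :
    Integrable fun y : EuclideanSpace ℝ (Fin k) => ((1 + ‖y‖^2)^p)⁻¹ := by
  have := integrable_rpow_neg_one_add_norm_sq (E := EuclideanSpace ℝ (Fin k)) (μ := volume) (r := 2 * p)
    (by simp; exact_mod_cast h)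
  refine this.congr (Filter.Eventually.of_forall fun x => ?_)
  simp only
  rw [show -(2 * (p:ℝ))/2 = -(p:ℝ) by ring, Real.rpow_neg (by positivity), Real.rpow_natCast]

lemma scal (k p : ℕ) {s : ℝ} (hs : 0 < s) :
    ∫ y : EuclideanSpace ℝ (Fin k), ((s * (1 + ‖s⁻¹ • y‖^2))^p)⁻¹ =
      s^k * (s^p)⁻¹ * ∫ y : EuclideanSpace ℝ (Fin k), ((1 + ‖y‖^2)^p)⁻¹ := by
  have := Measure.integral_comp_inv_smul_of_nonneg (volume : Measure (EuclideanSpace ℝ (Fin k)))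
    (fun y => ((s * (1 + ‖y‖^2))^p)⁻¹) hs.le
  rw [this]
  simp only [finrank_euclideanSpace, Fintype.card_fin, smul_eq_mul, mul_pow, mul_inv]
  rw [integral_const_mul]; ring

lemma scal_int {k p : ℕ} (h : k < 2 * p) {s c : ℝ} (hs : 0 < s) :
    Integrable fun y : EuclideanSpace ℝ (Fin k) => ((c * (s * (1 + ‖s⁻¹ • y‖^2)))^p)⁻¹ := by
  have := ((japan h).comp_smul (inv_ne_zero hs.ne')).const_mul ((c * s)^p)⁻¹
  refine this.congr (Filter.Eventually.of_forall fun x => ?_)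
  simp only
  rw [← mul_inv, ← mul_pow, mul_assoc]

/-- the scaled quadratic -/
noncomputable def gs {m : ℕ} (l s : ℝ) (y : EuclideanSpace ℝ (Fin m)) : ℝ := l * (s * (1 + ‖s⁻¹ • y‖^2))

lemma gs_lint {k p : ℕ} (h : k < 2 * p) {s l : ℝ} (hl : 0 < l) (hs : 0 < s) :
    ∫⁻ y : EuclideanSpace ℝ (Fin k), ENNReal.ofReal ((gs l s y ^ p)⁻¹) =
      ENNReal.ofReal ((l^p)⁻¹ * (s^k * (s^p)⁻¹ * ∫ y : EuclideanSpace ℝ (Fin k), ((1 + ‖y‖^2)^p)⁻¹)) := by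
  unfold gs
  rw [← ofReal_integral_eq_lintegral_ofReal (scal_int h hs) (Filter.Eventually.of_forall fun x => by positivity),
    ← scal k p hs, ← integral_const_mul]
  simp only [mul_pow, mul_inv]

lemma sl_gs {m : ℕ} (hm : m ≠ 0) {s l : ℝ} (hl : 0 < l) (hs : 0 < s) :
    sl (m := m) (gs l s) = ENNReal.ofReal ((l^m)⁻¹ * ∫ y : EuclideanSpace ℝ (Fin m), ((1 + ‖y‖^2)^m)⁻¹) := by
  have h0 : ∫⁻ y : EuclideanSpace ℝ (Fin m), ENNReal.ofReal ((gs l s (econs 0 y) ^ m)⁻¹) =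
      ENNReal.ofReal ((l^m)⁻¹ * ∫ y : EuclideanSpace ℝ (Fin m), ((1 + ‖y‖^2)^m)⁻¹) := by
    have : ∀ y : EuclideanSpace ℝ (Fin m), gs l s (econs 0 y) = gs l s y := by
      intro y
      simp only [gs, norm_smul, mul_pow, norm_econs]; ring
    simp only [this]
    rw [gs_lint (by omega) hl hs, mul_inv_cancel₀ (by positivity), one_mul]
  apply le_antisymm
  · refine iSup_le fun t => ?_
    rw [← h0]
    refine lintegral_mono fun y => ENNReal.ofReal_le_ofReal ?_
    have h1 : 0 < gs l s (econs 0 y) := by unfold gs; positivity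
    have h2 : gs l s (econs 0 y) ≤ gs l s (econs t y) := by
      simp only [gs, norm_smul, mul_pow, norm_econs]
      have : (0:ℝ)^2 ≤ t^2 := by nlinarith [sq_nonneg t]
      gcongr
    gcongr
  · rw [← h0]
    exact le_iSup (fun t => ∫⁻ y : EuclideanSpace ℝ (Fin m), ENNReal.ofReal ((gs l s (econs t y) ^ m)⁻¹)) 0

lemma sl_pos_fin {m : ℕ} (hm : m ≠ 0) {f : EuclideanSpace ℝ (Fin (m+1)) → ℝ} (hf : Continuous f)
    {c : ℝ} (hc : 0 < c) (hfc : ∀ x, c * (1 + ‖x‖^2) ≤ f x) : sl f ≠ 0 ∧ sl f ≠ ⊤ := by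
  have pf : ∀ x, 0 < f x := fun x => lt_of_lt_of_le (by positivity) (hfc x)
  constructor
  · intro h
    have h1 : ∫⁻ y : EuclideanSpace ℝ (Fin m), ENNReal.ofReal ((f (econs 0 y) ^ m)⁻¹) = 0 :=
      le_antisymm (h ▸ le_iSup (fun t => ∫⁻ y : EuclideanSpace ℝ (Fin m), ENNReal.ofReal ((f (econs t y) ^ m)⁻¹)) 0) (by simp)
    have hcont : Continuous fun y : EuclideanSpace ℝ (Fin m) => f (econs 0 y) := by
      refine hf.comp ?_
      unfold econs
      refine (PiLp.continuous_toLp 2 _).comp ?_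
      refine continuous_pi fun i => ?_
      refine Fin.cases ?_ (fun j => ?_) i
      · simp only [Fin.cons_zero]; fun_prop
      · simp only [Fin.cons_succ]; fun_prop
    have hme : Measurable fun y : EuclideanSpace ℝ (Fin m) => ENNReal.ofReal ((f (econs 0 y) ^ m)⁻¹) :=
      (hcont.measurable.pow_const m).inv.ennreal_ofReal
    rw [lintegral_eq_zero_iff hme] at h1
    have : ∀ᵐ y : EuclideanSpace ℝ (Fin m), False := by
      filter_upwards [h1] with y hy
      simp only [Pi.zero_apply, ENNReal.ofReal_eq_zero] at hy
      have := pf (econs 0 y)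
      have : 0 < (f (econs 0 y) ^ m)⁻¹ := by positivity
      linarith
    simp [ae_iff] at this
    exact absurd this (NeZero.ne _)
  · have : sl f ≤ sl (m := m) (gs c 1) := by
      refine iSup_mono fun t => lintegral_mono fun y => ENNReal.ofReal_le_ofReal ?_
      have h1 := hfc (econs t y)
      have h2 : gs c 1 (econs t y) = c * (1 + ‖econs t y‖^2) := by simp [gs]
      rw [h2]
      have : 0 < c * (1 + ‖econs t y‖^2) := by positivity
      gcongr
    rw [sl_gs hm hc one_pos] at this
    exact ne_top_of_le_ne_top (by simp) this

lemma integrable_f {m p : ℕ} (hp : m < 2 * p) {f : EuclideanSpace ℝ (Fin m) → ℝ} (hf : Continuous f)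
    {c : ℝ} (hc : 0 < c) (hfc : ∀ x, c * (1 + ‖x‖^2) ≤ f x) : Integrable fun x => (f x ^ p)⁻¹ := by
  refine ((japan hp).const_mul ((c^p)⁻¹)).mono' (hf.measurable.pow_const p).inv.aestronglyMeasurable
    (Filter.Eventually.of_forall fun x => ?_)
  have pf : 0 < f x := lt_of_lt_of_le (by positivity) (hfc x)
  rw [Real.norm_of_nonneg (by positivity), ← mul_inv, ← mul_pow]
  have := hfc x
  gcongr

lemma inv_pow_bound {m : ℕ} {f F τ K : ℝ} (hf : 0 < f) (hF : F = f * (1 + τ)) (hτ : |τ| ≤ K)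
    (hK : m * K ≤ 1/2) : (F^m)⁻¹ ≤ (f^m)⁻¹ - m * τ * (f^m)⁻¹ + 2 * m^2 * K^2 * (f^m)⁻¹ := by
  rcases Nat.eq_zero_or_pos m with rfl | hm
  · simp
  have hm1 : (1:ℝ) ≤ m := by exact_mod_cast hm
  have hK0 : 0 ≤ K := (abs_nonneg _).trans hτ
  have hτ1 := abs_le.mp hτ
  have h1 : 1 + m * τ ≤ (1 + τ)^m := one_add_mul_le_pow (by nlinarith) m
  have h2 : (1:ℝ)/2 ≤ 1 + m * τ := by nlinarith
  have h3 : ((1+τ)^m)⁻¹ ≤ 1 - m * τ + 2 * m^2 * K^2 := by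
    calc ((1+τ)^m)⁻¹ ≤ (1 + m * τ)⁻¹ := by gcongr
      _ ≤ 1 - m * τ + 2 * (m * τ)^2 := by
        rw [inv_le_iff_one_le_mul₀ (by linarith)]
        nlinarith [sq_nonneg (m * τ)]
      _ ≤ _ := by
        have : τ^2 ≤ K^2 := by rw [← sq_abs]; gcongr
        have : (m:ℝ)^2 * τ^2 ≤ m^2 * K^2 := by gcongr
        linarith [mul_pow (m:ℝ) τ 2]
  rw [hF, mul_pow, mul_inv]
  have : 0 < (f^m)⁻¹ := by positivity
  nlinarith

end ISP


namespace ISP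

lemma core_step {m : ℕ} (hm : 2 ≤ m) {f : EuclideanSpace ℝ (Fin (m+1)) → ℝ}
    {D : EuclideanSpace ℝ (Fin (m+1)) → (EuclideanSpace ℝ (Fin (m+1)) →L[ℝ] ℝ)}
    (hf : Continuous f) (hD : Continuous D) {c L M l s : ℝ} (hc : 0 < c) (hL : 0 ≤ L) (hM : 0 ≤ M)
    (hfc : ∀ x, c * (1 + ‖x‖^2) ≤ f x) (hDM : ∀ x, ‖D x‖^2 ≤ M * f x)
    (hlow : ∀ z y, f z - D z y - L * ‖y‖^2 ≤ f (z - y)) (hl : 0 < l)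
    (hsl : sl f = ENNReal.ofReal ((l^m)⁻¹ * ∫ y : EuclideanSpace ℝ (Fin m), ((1 + ‖y‖^2)^m)⁻¹))
    (hs : 0 < s) (h1 : 2 * L * s ≤ l) (h2 : m * (s * (l / c + M / (2 * l))) ≤ 1/2) :
    (l^m)⁻¹ * (∫ y : EuclideanSpace ℝ (Fin (m+1)), ((1 + ‖y‖^2)^m)⁻¹) ≤
      m * ((∫ x, ‖D x‖^2 * (f x ^ (m+1))⁻¹) / (4 * (l - L * s)) - l * ∫ x, (f x ^ (m+1))⁻¹)
       + s * (2 * m^2 * (l / c + M / (2 * l))^2 * ∫ x, (f x ^ m)⁻¹) := by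
  have pf : ∀ x, 0 < f x := fun x => lt_of_lt_of_le (by positivity) (hfc x)
  have hfc' : ∀ x, c ≤ f x := fun x => le_trans (by nlinarith [sq_nonneg ‖x‖]) (hfc x)
  set K := l / c + M / (2 * l) with hK
  have hK0 : 0 ≤ K := by positivity
  set q := l - L * s with hq
  have hq0 : l ≤ 2 * q := by linarith
  have hqp : 0 < q := by linarith
  set F : EuclideanSpace ℝ (Fin (m+1)) → ℝ := fun x => f x + s * (l - ‖D x‖^2 / (4 * q)) with hF
  set τ : EuclideanSpace ℝ (Fin (m+1)) → ℝ := fun x => s * (l / f x - ‖D x‖^2 / f x / (4 * q)) with hτ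
  have hFτ : ∀ x, F x = f x * (1 + τ x) := by
    intro x
    have := (pf x).ne'
    simp only [hF, hτ]
    field_simp
  have hm1 : (2:ℝ) ≤ m := by exact_mod_cast hm
  have hτK : ∀ x, |τ x| ≤ s * K := by
    intro x
    simp only [hτ]
    rw [abs_mul, abs_of_pos hs]
    gcongr
    have a1 : l / f x ≤ l / c := by have := hfc' x; gcongr
    have a2 : 0 ≤ l / f x := by have := pf x; positivity
    have a3 : ‖D x‖^2 / f x ≤ M := by rw [div_le_iff₀ (pf x)]; exact hDM x
    have a3' : 0 ≤ ‖D x‖^2 / f x := by have := pf x; positivity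
    have a4 : ‖D x‖^2 / f x / (4 * q) ≤ M / (2 * l) := by
      have : 2 * l ≤ 4 * q := by linarith
      gcongr
    have a5 : 0 ≤ ‖D x‖^2 / f x / (4 * q) := by positivity
    have a6 : 0 ≤ M / (2*l) := by positivity
    rw [abs_le]; constructor <;> linarith
  have hsK : s * K ≤ 1/4 := by nlinarith [mul_nonneg hs.le hK0]
  have hFpos : ∀ x, 0 < F x := by
    intro x
    rw [hFτ]
    have := abs_le.mp (hτK x)
    exact mul_pos (pf x) (by linarith)
  have hFc : Continuous F := by fun_prop
  have iA : Integrable fun x => (f x ^ m)⁻¹ := integrable_f (by omega) hf hc hfc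
  have iN : Integrable fun x => (f x ^ (m+1))⁻¹ := integrable_f (by omega) hf hc hfc
  have iE : Integrable fun x => ‖D x‖^2 * (f x ^ (m+1))⁻¹ := by
    refine (iA.const_mul M).mono' (by
      refine (Measurable.mul (by fun_prop) ?_).aestronglyMeasurable
      exact (hf.measurable.pow_const _).inv) (Filter.Eventually.of_forall fun x => ?_)
    have := pf x
    rw [Real.norm_of_nonneg (by positivity), pow_succ (f x), mul_inv]
    have := hDM x
    calc ‖D x‖^2 * ((f x ^ m)⁻¹ * (f x)⁻¹) ≤ (M * f x) * ((f x ^ m)⁻¹ * (f x)⁻¹) := by gcongr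
      _ = _ := by field_simp
  have hgc : Continuous (gs (m := m+1) l s) := by unfold gs; fun_prop
  have bl := eucl_bl (by omega) hf hgc hFc pf (fun y => by unfold gs; positivity) hFpos ?_ (hsl.trans (sl_gs (by omega) hl hs).symm)
    (by rw [hsl]; simp)
  swap
  · intro x y
    have e := hlow (x + y) y
    rw [add_sub_cancel_right] at e
    have e2 : D (x+y) y ≤ ‖D (x+y)‖ * ‖y‖ := (le_abs_self _).trans ((D (x+y)).le_opNorm y)
    have e3 : gs l s y = s * l + l * ‖y‖^2 / s := by
      unfold gs; rw [norm_smul, norm_inv, Real.norm_of_nonneg hs.le]; field_simp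
    have e4 : l * ‖y‖^2 / s = L * ‖y‖^2 + q / s * ‖y‖^2 := by rw [hq]; field_simp; ring
    have e5 : ‖D (x+y)‖ * ‖y‖ ≤ q / s * ‖y‖^2 + s * (‖D (x+y)‖^2 / (4 * q)) := by
      have : q / s * ‖y‖^2 + s * (‖D (x+y)‖^2 / (4 * q)) - ‖D (x+y)‖ * ‖y‖ = (2 * q * ‖y‖ - s * ‖D (x+y)‖)^2 / (4 * q * s) := by
        field_simp; ring
      have : 0 ≤ (2 * q * ‖y‖ - s * ‖D (x+y)‖)^2 / (4 * q * s) := by positivity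
      linarith
    simp only [hF]
    rw [e3, e4]
    linarith
  rw [gs_lint (by omega) hl hs] at bl
  have bound : ∀ x, (F x ^ m)⁻¹ ≤ (f x ^ m)⁻¹ - m * s * (l * (f x ^ (m+1))⁻¹ - ‖D x‖^2 * (f x ^ (m+1))⁻¹ / (4 * q))
      + 2 * m^2 * (s * K)^2 * (f x ^ m)⁻¹ := by
    intro x
    have := inv_pow_bound (pf x) (hFτ x) (hτK x) h2
    refine this.trans (le_of_eq ?_)
    congr 2
    simp only [hτ]
    rw [pow_succ (f x)]
    have := (pf x).ne'
    field_simp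
  have ib1 : Integrable fun x => l * (f x ^ (m+1))⁻¹ - ‖D x‖^2 * (f x ^ (m+1))⁻¹ / (4 * q) :=
    (iN.const_mul _).sub (iE.div_const _)
  have ib : Integrable fun x => (f x ^ m)⁻¹ - m * s * (l * (f x ^ (m+1))⁻¹ - ‖D x‖^2 * (f x ^ (m+1))⁻¹ / (4 * q))
      + 2 * m^2 * (s * K)^2 * (f x ^ m)⁻¹ := (iA.sub (ib1.const_mul _)).add (iA.const_mul _)
  have iF : Integrable fun x => (F x ^ m)⁻¹ := by
    refine ib.mono' (hFc.measurable.pow_const _).inv.aestronglyMeasurable (Filter.Eventually.of_forall fun x => ?_)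
    have := hFpos x
    rw [Real.norm_of_nonneg (by positivity)]
    exact bound x
  have bI := integral_mono iF ib bound
  have ei : ∫ x, ((f x ^ m)⁻¹ - m * s * (l * (f x ^ (m+1))⁻¹ - ‖D x‖^2 * (f x ^ (m+1))⁻¹ / (4 * q))
      + 2 * m^2 * (s * K)^2 * (f x ^ m)⁻¹) = (∫ x, (f x ^ m)⁻¹) - m * s * (l * (∫ x, (f x ^ (m+1))⁻¹) - (∫ x, ‖D x‖^2 * (f x ^ (m+1))⁻¹) / (4 * q))
      + 2 * m^2 * (s * K)^2 * (∫ x, (f x ^ m)⁻¹) := by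
    have ib2 : Integrable fun x => (f x ^ m)⁻¹ - m * s * (l * (f x ^ (m+1))⁻¹ - ‖D x‖^2 * (f x ^ (m+1))⁻¹ / (4 * q)) :=
      iA.sub (ib1.const_mul _)
    rw [integral_add ib2 (iA.const_mul _), integral_sub iA (ib1.const_mul _), integral_const_mul,
      integral_sub (iN.const_mul _) (iE.div_const _), integral_const_mul, integral_div, integral_const_mul]
  rw [ei] at bI
  rw [← ofReal_integral_eq_lintegral_ofReal iA (Filter.Eventually.of_forall fun x => by have := pf x; positivity),
    ← ofReal_integral_eq_lintegral_ofReal iF (Filter.Eventually.of_forall fun x => by have := hFpos x; positivity),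
    ← ENNReal.ofReal_add (integral_nonneg fun x => by have := pf x; positivity)
      (mul_nonneg (by positivity) (mul_nonneg (by positivity) (integral_nonneg fun x => by positivity))),
    ENNReal.ofReal_le_ofReal_iff (integral_nonneg fun x => by have := hFpos x; positivity)] at bl
  have e9 : s^(m+1) * (s^m)⁻¹ = s := by rw [pow_succ]; field_simp
  rw [e9] at bl
  have := bl.trans bI
  have := (mul_le_mul_iff_right₀ hs).mp (show s * ((l^m)⁻¹ * (∫ y : EuclideanSpace ℝ (Fin (m+1)), ((1 + ‖y‖^2)^m)⁻¹)) ≤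
    s * (m * ((∫ x, ‖D x‖^2 * (f x ^ (m+1))⁻¹) / (4 * q) - l * ∫ x, (f x ^ (m+1))⁻¹)
       + s * (2 * m^2 * K^2 * ∫ x, (f x ^ m)⁻¹)) by linarith)
  exact this

lemma core {m : ℕ} (hm : 2 ≤ m) {f : EuclideanSpace ℝ (Fin (m+1)) → ℝ}
    {D : EuclideanSpace ℝ (Fin (m+1)) → (EuclideanSpace ℝ (Fin (m+1)) →L[ℝ] ℝ)}
    (hf : Continuous f) (hD : Continuous D) {c L M : ℝ} (hc : 0 < c) (hL : 0 ≤ L) (hM : 0 ≤ M)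
    (hfc : ∀ x, c * (1 + ‖x‖^2) ≤ f x) (hDM : ∀ x, ‖D x‖^2 ≤ M * f x)
    (hlow : ∀ z y, f z - D z y - L * ‖y‖^2 ≤ f (z - y)) :
    ∃ l : ℝ, 0 < l ∧ (l^m)⁻¹ * (∫ y : EuclideanSpace ℝ (Fin (m+1)), ((1 + ‖y‖^2)^m)⁻¹) ≤
      m * ((∫ x, ‖D x‖^2 * (f x ^ (m+1))⁻¹) / (4 * l) - l * ∫ x, (f x ^ (m+1))⁻¹) := by
  obtain ⟨s0, s1⟩ := sl_pos_fin (by omega) hf hc hfc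
  obtain ⟨κ0, κ1⟩ := sl_pos_fin (m := m) (f := gs 1 1) (by omega) (by unfold gs; fun_prop) one_pos (by intro x; simp [gs])
  have eκ := sl_gs (m := m) (by omega) one_pos one_pos
  rw [one_pow, inv_one, one_mul] at eκ
  set κ := ∫ y : EuclideanSpace ℝ (Fin m), ((1 + ‖y‖^2)^m)⁻¹ with hκ
  have hκ0 : 0 < κ := by
    rw [eκ] at κ0; simpa using κ0
  obtain ⟨l, hl, hl2⟩ := exists_pow_inv (A := sl f / ENNReal.ofReal κ) (k := m) (ENNReal.div_ne_zero.mpr ⟨s0, by simp⟩)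
    (ENNReal.div_ne_top s1 (by simpa using hκ0)) (by omega)
  have hsl : sl f = ENNReal.ofReal ((l^m)⁻¹ * κ) := by
    rw [ENNReal.ofReal_mul (by positivity), ← hl2, ENNReal.div_mul_cancel (by simpa using hκ0) (by simp)]
  refine ⟨l, hl, ?_⟩
  refine ge_of_tendsto (x := nhdsWithin 0 (Set.Ioi 0)) (f := fun s => m * ((∫ x, ‖D x‖^2 * (f x ^ (m+1))⁻¹) / (4 * (l - L * s)) - l * ∫ x, (f x ^ (m+1))⁻¹)
       + s * (2 * m^2 * (l / c + M / (2 * l))^2 * ∫ x, (f x ^ m)⁻¹)) ?_ ?_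
  · have : ContinuousAt (fun s => m * ((∫ x, ‖D x‖^2 * (f x ^ (m+1))⁻¹) / (4 * (l - L * s)) - l * ∫ x, (f x ^ (m+1))⁻¹)
       + s * (2 * m^2 * (l / c + M / (2 * l))^2 * ∫ x, (f x ^ m)⁻¹)) 0 := by
      refine ContinuousAt.add (ContinuousAt.mul continuousAt_const (ContinuousAt.sub (ContinuousAt.div continuousAt_const (by fun_prop) (by simp; exact hl.ne')) (by fun_prop))) (by fun_prop)
    have h := this.tendsto.mono_left (nhdsWithin_le_nhds (s := Set.Ioi 0))
    simpa using h
  · have t1 : Filter.Tendsto (fun s : ℝ => 2 * L * s) (nhdsWithin 0 (Set.Ioi 0)) (nhds 0) := by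
      have : Continuous fun s : ℝ => 2 * L * s := by fun_prop
      simpa using (this.tendsto 0).mono_left (nhdsWithin_le_nhds (s := Set.Ioi 0))
    have t2 : Filter.Tendsto (fun s : ℝ => m * (s * (l / c + M / (2 * l)))) (nhdsWithin 0 (Set.Ioi 0)) (nhds 0) := by
      have : Continuous fun s : ℝ => m * (s * (l / c + M / (2 * l))) := by fun_prop
      simpa using (this.tendsto 0).mono_left (nhdsWithin_le_nhds (s := Set.Ioi 0))
    filter_upwards [t1.eventually_le_const hl, t2.eventually_le_const (show (0:ℝ) < 1/2 by norm_num), self_mem_nhdsWithin] with s a1 a2 a3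
    exact core_step hm hf hD hc hL hM hfc hDM hlow hl hsl a3 a1 a2

end ISP


namespace ISP

lemma amgm_l {k : ℕ} (hk : 1 ≤ k) {l N κ G : ℝ} (hl : 0 < l) (hN : 0 ≤ N) (hκ : 0 ≤ κ)
    (h : (l^(k+1))⁻¹ * κ ≤ (k+1 : ℝ) * (G / (k^2 * l) - l * N)) :
    (k+2 : ℝ) * k * (κ * k / (2 * (k+1))) ^ ((2:ℝ)/(k+2)) * N ^ ((k:ℝ)/(k+2)) ≤ G := by
  have hk0 : (0:ℝ) < k := by exact_mod_cast hk
  have hG : k^2 * (l^2 * N + κ * (l^k)⁻¹ / (k+1)) ≤ G := by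
    have e : (l^(k+1))⁻¹ * κ = (κ * (l^k)⁻¹ / (k+1)) * ((k+1) / l) := by rw [pow_succ]; field_simp
    have e2 : (k+1 : ℝ) * (G / (k^2 * l) - l * N) = (G / k^2 - l^2 * N) * ((k+1)/l) := by field_simp
    rw [e, e2] at h
    have h3 := le_of_mul_le_mul_right h (by positivity)
    have : κ * (l^k)⁻¹ / (k+1) + l^2 * N ≤ G / k^2 := by linarith
    rw [le_div_iff₀ (by positivity)] at this
    linarith
  refine le_trans ?_ hG
  have ag := Real.geom_mean_le_arith_mean2_weighted (w₁ := (k:ℝ)/(k+2)) (w₂ := (2:ℝ)/(k+2))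
    (p₁ := l^2 * N * ((k+2)/k)) (p₂ := κ * (l^k)⁻¹ * (k+2)/(2*(k+1))) (by positivity) (by positivity) (by positivity) (by positivity)
    (by field_simp)
  have e1 : (k:ℝ)/(k+2) * (l^2 * N * ((k+2)/k)) + (2:ℝ)/(k+2) * (κ * (l^k)⁻¹ * (k+2)/(2*(k+1))) = l^2 * N + κ * (l^k)⁻¹ / (k+1) := by
    field_simp
  rw [e1] at ag
  refine le_trans (le_of_eq ?_) (mul_le_mul_of_nonneg_left ag (by positivity))
  have p1 : (l^2 * N * ((k+2)/k)) ^ ((k:ℝ)/(k+2)) = (l^k)^((2:ℝ)/(k+2)) * N ^ ((k:ℝ)/(k+2)) * (((k:ℝ)+2)^((k:ℝ)/(k+2)) * ((k:ℝ) ^ ((2:ℝ)/(k+2)) / k)) := by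
    rw [Real.mul_rpow (by positivity) (by positivity), Real.mul_rpow (by positivity) (by positivity), Real.div_rpow (by positivity) (by positivity),
      ← Real.rpow_natCast l 2, ← Real.rpow_natCast l k, ← Real.rpow_mul hl.le, ← Real.rpow_mul hl.le]
    have : (k:ℝ) ^ ((2:ℝ)/(k+2)) / k = ((k:ℝ) ^ ((k:ℝ)/(k+2)))⁻¹ := by
      rw [← Real.rpow_neg hk0.le, div_eq_mul_inv, ← Real.rpow_neg_one, ← Real.rpow_add hk0]
      congr 1; field_simp; ring
    rw [this]
    push_cast
    rw [show (2:ℝ) * (k/(k+2)) = k * (2/(k+2)) by ring]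
    ring
  have p2 : (κ * (l^k)⁻¹ * (k+2)/(2*(k+1))) ^ ((2:ℝ)/(k+2)) = ((l^k)^((2:ℝ)/(k+2)))⁻¹ * ((k:ℝ)+2)^((2:ℝ)/(k+2)) * (κ / (2*(k+1))) ^ ((2:ℝ)/(k+2)) := by
    rw [show κ * (l^k)⁻¹ * (k+2)/(2*(k+1)) = (l^k)⁻¹ * (k+2) * (κ / (2*(k+1))) by ring, Real.mul_rpow (by positivity) (by positivity), Real.mul_rpow (by positivity) (by positivity),
      Real.inv_rpow (by positivity)]
  have p3 : (κ * k / (2 * (k+1))) ^ ((2:ℝ)/(k+2)) = (k:ℝ)^((2:ℝ)/(k+2)) * (κ / (2*(k+1))) ^ ((2:ℝ)/(k+2)) := by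
    rw [← Real.mul_rpow (by positivity) (by positivity)]; congr 1; ring
  have p4 : ((k:ℝ)+2)^((k:ℝ)/(k+2)) * ((k:ℝ)+2)^((2:ℝ)/(k+2)) = k + 2 := by
    rw [← Real.rpow_add (by positivity), show (k:ℝ)/(k+2) + 2/(k+2) = 1 by field_simp, Real.rpow_one]
  have hl3 : (0:ℝ) < (l^k)^((2:ℝ)/(k+2)) := by positivity
  rw [p1, p2, p3]
  generalize (l^k)^((2:ℝ)/(k+2)) = a at *
  generalize (k:ℝ)^((2:ℝ)/(k+2)) = b at *
  generalize (κ / (2*(k+1))) ^ ((2:ℝ)/((k:ℝ)+2)) = c at *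
  generalize N ^ ((k:ℝ)/(k+2)) = e at *
  rw [show ((k:ℝ)^2 * (a * e * (((k:ℝ)+2)^((k:ℝ)/(k+2)) * (b / k)) * (a⁻¹ * ((k:ℝ)+2)^((2:ℝ)/(k+2)) * c)))
    = (((k:ℝ)+2)^((k:ℝ)/(k+2)) * ((k:ℝ)+2)^((2:ℝ)/(k+2))) * (k^2 * (a * e * (b / k) * (a⁻¹ * c))) by ring, p4]
  field_simp

/-- the bubble -/
noncomputable def bub {n : ℕ} (k : ℕ) (x : EuclideanSpace ℝ (Fin n)) : ℝ := (1 + ‖x‖^2) ^ (-(k:ℝ)/2)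

lemma bub_pos {n k : ℕ} (x : EuclideanSpace ℝ (Fin n)) : 0 < bub k x := by unfold bub; positivity

lemma bub_contDiff {n k : ℕ} : ContDiff ℝ ((⊤:ℕ∞):WithTop ℕ∞) (bub k : EuclideanSpace ℝ (Fin n) → ℝ) := by
  unfold bub
  exact ContDiff.rpow_const_of_ne (contDiff_const.add (contDiff_norm_sq ℝ)) (fun x => by positivity)

lemma bub_inv {n k : ℕ} (hk : 1 ≤ k) (x : EuclideanSpace ℝ (Fin n)) : bub k x ^ (-(2:ℝ)/k) = 1 + ‖x‖^2 := by
  unfold bub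
  have : (0:ℝ) < k := by exact_mod_cast hk
  rw [← Real.rpow_mul (by positivity), show -(k:ℝ)/2 * (-2/k) = 1 by field_simp, Real.rpow_one]

lemma hasFDerivAt_normsq {n : ℕ} (x : EuclideanSpace ℝ (Fin n)) :
    HasFDerivAt (fun x : EuclideanSpace ℝ (Fin n) => ‖x‖^2) ((2:ℝ) • innerSL ℝ x) x := by
  have := (hasStrictFDerivAt_norm_sq x).hasFDerivAt
  rwa [show (2:ℕ) • innerSL ℝ x = (2:ℝ) • innerSL ℝ x by rw [two_smul, two_smul]] at this

lemma bub_fderiv {n k : ℕ} (x : EuclideanSpace ℝ (Fin n)) :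
    ‖fderiv ℝ (bub k) x‖^2 ≤ k^2 * ((1 + ‖x‖^2)^(k+1))⁻¹ := by
  have h := ((hasFDerivAt_normsq x).const_add 1).rpow_const (p := -(k:ℝ)/2) (Or.inl (by positivity))
  have h2 : fderiv ℝ (bub k) x = (-(k:ℝ)/2 * (1 + ‖x‖^2) ^ (-(k:ℝ)/2 - 1)) • (2:ℝ) • innerSL ℝ x := h.fderiv
  rw [h2, norm_smul, norm_smul, innerSL_apply_norm, mul_pow, mul_pow, Real.norm_eq_abs, Real.norm_eq_abs, sq_abs, sq_abs, mul_pow]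
  have hp : (0:ℝ) < 1 + ‖x‖^2 := by positivity
  have : ((1 + ‖x‖^2) ^ (-(k:ℝ)/2 - 1))^2 = ((1 + ‖x‖^2)^(k+2))⁻¹ := by
    generalize 1 + ‖x‖^2 = r at *
    rw [← Real.rpow_natCast, ← Real.rpow_natCast, ← Real.rpow_neg hp.le, ← Real.rpow_mul hp.le]
    congr 1; push_cast; ring
  rw [this]
  have e : ((1 + ‖x‖^2)^(k+1))⁻¹ = (1 + ‖x‖^2) * ((1 + ‖x‖^2)^(k+2))⁻¹ := by
    rw [pow_succ _ (k+1)]; field_simp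
  rw [e]
  have : 0 ≤ (k:ℝ)^2 * ((1 + ‖x‖^2)^(k+2))⁻¹ := by positivity
  nlinarith

/-- quadratic estimate for compactly supported smooth functions -/
lemma quad_est {n : ℕ} {ψ : EuclideanSpace ℝ (Fin n) → ℝ} (h : ContDiff ℝ ((⊤:ℕ∞):WithTop ℕ∞) ψ) (hc : HasCompactSupport ψ) :
    ∃ L : ℝ, 0 ≤ L ∧ ∀ z y, ψ z - fderiv ℝ ψ z y - L * ‖y‖^2 ≤ ψ (z - y) := by
  have h1 : ContDiff ℝ 1 (fderiv ℝ ψ) := h.fderiv_right (m := 1) (WithTop.coe_le_coe.mpr (le_top : (1 + 1 : ℕ∞) ≤ ⊤))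
  obtain ⟨C, hC⟩ := h1.lipschitzWith_of_hasCompactSupport (hc.fderiv ℝ) (by simp)
  refine ⟨C, C.2, fun z y => ?_⟩
  have hdiff : Differentiable ℝ ψ := h.differentiable (by simp)
  have := (convex_segment z (z - y)).norm_image_sub_le_of_norm_fderiv_le' (𝕜 := ℝ) (f := ψ) (φ := fderiv ℝ ψ z) (C := C * ‖y‖)
    (x := z) (y := z - y) (fun x _ => hdiff x) (fun x hx => ?_) (left_mem_segment ℝ _ _) (right_mem_segment ℝ _ _)
  · have e : z - y - z = -y := by abel
    rw [e, norm_neg, map_neg] at this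
    have := (abs_le.mp this).1
    nlinarith
  · have := hC.dist_le_mul x z
    rw [dist_eq_norm, dist_eq_norm] at this
    refine this.trans ?_
    gcongr
    rw [segment_eq_image'] at hx
    obtain ⟨t, ht, rfl⟩ := hx
    rw [add_sub_cancel_left, norm_smul, Real.norm_of_nonneg ht.1, show z - y - z = -y by abel, norm_neg]
    nlinarith [norm_nonneg y, ht.2]

end ISP


namespace ISP

lemma kap_nonneg (n p : ℕ) : 0 ≤ ∫ y : EuclideanSpace ℝ (Fin n), ((1 + ‖y‖^2)^p)⁻¹ :=
  integral_nonneg fun y => by positivity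

lemma sob_eps {k : ℕ} (hk : 1 ≤ k) {φ : EuclideanSpace ℝ (Fin (k+2)) → ℝ}
    (hφ : ContDiff ℝ ((⊤:ℕ∞):WithTop ℕ∞) φ) (hcs : HasCompactSupport φ) (h0 : ∀ x, 0 ≤ φ x) {ε : ℝ} (hε : 0 < ε) :
    Integrable (fun x => (φ x + ε * bub k x) ^ (2 * ((k:ℝ)+2) / k)) ∧
    (k+2 : ℝ) * k * ((∫ y : EuclideanSpace ℝ (Fin (k+2)), ((1 + ‖y‖^2)^(k+1))⁻¹) * k / (2 * (k+1))) ^ ((2:ℝ)/(k+2))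
      * (∫ x, (φ x + ε * bub k x) ^ (2 * ((k:ℝ)+2) / k)) ^ ((k:ℝ)/(k+2)) ≤
      ∫ x, ‖fderiv ℝ (fun x => φ x + ε * bub k x) x‖^2 := by
  have hk0 : (0:ℝ) < k := by exact_mod_cast hk
  set u : EuclideanSpace ℝ (Fin (k+2)) → ℝ := fun x => φ x + ε * bub k x with hu
  have hup : ∀ x, 0 < u x := fun x => add_pos_of_nonneg_of_pos (h0 x) (mul_pos hε (bub_pos x))
  have huc : ContDiff ℝ ((⊤:ℕ∞):WithTop ℕ∞) u := hφ.add (contDiff_const.mul bub_contDiff)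
  set f : EuclideanSpace ℝ (Fin (k+2)) → ℝ := fun x => u x ^ (-(2:ℝ)/k) with hf
  have hfc : ContDiff ℝ ((⊤:ℕ∞):WithTop ℕ∞) f := huc.rpow_const_of_ne fun x => (hup x).ne'
  set c := ε ^ (-(2:ℝ)/k) with hc
  have hcp : 0 < c := by positivity
  have htop : (((⊤:ℕ∞):WithTop ℕ∞)) ≠ 0 := by simp
  set ψ : EuclideanSpace ℝ (Fin (k+2)) → ℝ := fun x => f x - c * (1 + ‖x‖^2) with hψ
  have hψc : ContDiff ℝ ((⊤:ℕ∞):WithTop ℕ∞) ψ :=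
    hfc.sub (contDiff_const.mul (contDiff_const.add (contDiff_norm_sq ℝ)))
  have hψs : HasCompactSupport ψ := by
    refine hcs.mono fun x hx => ?_
    rw [Function.mem_support] at hx ⊢
    intro h
    apply hx
    simp only [hψ, hf, hu, h, zero_add]
    rw [Real.mul_rpow hε.le (bub_pos x).le, bub_inv hk]
    ring
  obtain ⟨L, hL, hquad⟩ := quad_est hψc hψs
  have hDψ : Continuous (fderiv ℝ ψ) := hψc.continuous_fderiv htop
  obtain ⟨B, hB⟩ := hDψ.bounded_above_of_compact_support (hψs.fderiv ℝ)
  have hB0 : 0 ≤ B := (norm_nonneg _).trans (hB 0)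
  have hdf : ∀ x, fderiv ℝ f x = c • (2:ℝ) • innerSL ℝ x + fderiv ℝ ψ x := by
    intro x
    have h1 := (((hasFDerivAt_normsq x).const_add 1).const_mul c).add ((hψc.differentiable htop) x).hasFDerivAt
    rw [← h1.fderiv]
    congr 1
    ext y
    simp [hψ]
  -- lower bound
  obtain ⟨A, hA⟩ : ∃ A, ∀ x, ‖φ x / bub k x‖ ≤ A := by
    refine Continuous.bounded_above_of_compact_support ?_ ?_
    · exact hφ.continuous.div bub_contDiff.continuous fun x => (bub_pos x).ne'
    · refine hcs.mono fun x hx => ?_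
      rw [Function.mem_support] at hx ⊢
      intro h; apply hx; rw [h, zero_div]
  have hA0 : 0 ≤ A := (norm_nonneg _).trans (hA 0)
  have hlowf : ∀ x, (A + ε) ^ (-(2:ℝ)/k) * (1 + ‖x‖^2) ≤ f x := by
    intro x
    rw [← bub_inv hk x, ← Real.mul_rpow (by positivity) (bub_pos x).le]
    refine Real.rpow_le_rpow_of_nonpos (hup x) ?_ (by rw [neg_div]; simp; positivity)
    have := (le_abs_self _).trans (hA x)
    rw [div_le_iff₀ (bub_pos x)] at this
    simp only [hu]
    linarith
  set c0 := (A + ε) ^ (-(2:ℝ)/k) with hc0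
  have hc0p : 0 < c0 := by positivity
  set M := (8 * c^2 + 2 * B^2) / c0 with hM
  have hDM : ∀ x, ‖fderiv ℝ f x‖^2 ≤ M * f x := by
    intro x
    have h1 : ‖fderiv ℝ f x‖ ≤ c * (2 * ‖x‖) + B := by
      rw [hdf]
      refine (norm_add_le _ _).trans (add_le_add ?_ (hB x))
      rw [norm_smul, norm_smul, innerSL_apply_norm, Real.norm_of_nonneg hcp.le, Real.norm_of_nonneg zero_le_two]
    have h2 : ‖fderiv ℝ f x‖^2 ≤ (c * (2 * ‖x‖) + B)^2 := by gcongr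
    have h3 : (c * (2 * ‖x‖) + B)^2 ≤ (8 * c^2 + 2 * B^2) * (1 + ‖x‖^2) := by
      nlinarith [sq_nonneg (c * (2 * ‖x‖) - B), sq_nonneg (B * ‖x‖), sq_nonneg c]
    have h4 : (8 * c^2 + 2 * B^2) * (1 + ‖x‖^2) = M * (c0 * (1 + ‖x‖^2)) := by
      rw [hM]; field_simp
    calc _ ≤ M * (c0 * (1 + ‖x‖^2)) := by linarith
      _ ≤ _ := by have := hlowf x; gcongr
  have hlow : ∀ z y, f z - fderiv ℝ f z y - L * ‖y‖^2 ≤ f (z - y) := by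
    intro z y
    have h1 := hquad z y
    have h2 : ‖z - y‖^2 = ‖z‖^2 - 2 * inner ℝ z y + ‖y‖^2 := norm_sub_sq_real z y
    have h3 : ∀ x, f x = ψ x + c * (1 + ‖x‖^2) := fun x => by simp [hψ]
    rw [h3, h3, hdf, h2]
    simp only [ContinuousLinearMap.add_apply, ContinuousLinearMap.smul_apply, innerSL_apply_apply, smul_eq_mul]
    nlinarith [mul_nonneg hcp.le (sq_nonneg ‖y‖)]
  obtain ⟨l, hl, hcore⟩ := core (m := k+1) (by omega) hfc.continuous (hfc.continuous_fderiv htop) hc0p hL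
    (by positivity) hlowf hDM hlow
  have eN : ∀ x, (f x ^ (k+1+1))⁻¹ = u x ^ (2 * ((k:ℝ)+2)/k) := by
    intro x
    simp only [hf]
    rw [← Real.rpow_natCast, ← Real.rpow_neg (by have := hup x; positivity), ← Real.rpow_mul (hup x).le]
    congr 1; push_cast; field_simp; ring
  have eE : ∀ x, ‖fderiv ℝ f x‖^2 * (f x ^ (k+1+1))⁻¹ = 4 / k^2 * ‖fderiv ℝ u x‖^2 := by
    intro x
    have h1 := (((huc.differentiable htop) x).hasFDerivAt.rpow_const (p := -(2:ℝ)/k) (Or.inl (hup x).ne')).fderiv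
    have h2 : fderiv ℝ f x = (-(2:ℝ)/k * u x ^ (-(2:ℝ)/k - 1)) • fderiv ℝ u x := h1
    rw [h2, eN, norm_smul, mul_pow, Real.norm_eq_abs, sq_abs, mul_pow]
    have h3 : (u x ^ (-(2:ℝ)/k - 1))^2 * u x ^ (2 * ((k:ℝ)+2)/k) = 1 := by
      rw [← Real.rpow_natCast, ← Real.rpow_mul (hup x).le, ← Real.rpow_add (hup x)]
      rw [show (-(2:ℝ)/k - 1) * ((2:ℕ):ℝ) + 2 * ((k:ℝ)+2)/k = 0 by push_cast; field_simp; ring, Real.rpow_zero]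
    rw [show (-(2:ℝ)/k)^2 * (u x ^ (-(2:ℝ)/k - 1))^2 * ‖fderiv ℝ u x‖^2 * u x ^ (2 * ((k:ℝ)+2)/k) =
      ((u x ^ (-(2:ℝ)/k - 1))^2 * u x ^ (2 * ((k:ℝ)+2)/k)) * ((-(2:ℝ)/k)^2 * ‖fderiv ℝ u x‖^2) by ring, h3]
    ring
  have iN := integrable_f (p := k+1+1) (by omega) hfc.continuous hc0p hlowf
  simp only [eE] at hcore
  simp only [eN] at hcore iN
  refine ⟨iN, ?_⟩
  rw [integral_const_mul] at hcore
  refine amgm_l hk hl (integral_nonneg fun x => by have := hup x; positivity) (kap_nonneg _ _) ?_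
  refine hcore.trans (le_of_eq ?_)
  push_cast
  field_simp
  rfl

lemma sob_smooth {k : ℕ} (hk : 1 ≤ k) {φ : EuclideanSpace ℝ (Fin (k+2)) → ℝ}
    (hφ : ContDiff ℝ ((⊤:ℕ∞):WithTop ℕ∞) φ) (hcs : HasCompactSupport φ) (h0 : ∀ x, 0 ≤ φ x) :
    (k+2 : ℝ) * k * ((∫ y : EuclideanSpace ℝ (Fin (k+2)), ((1 + ‖y‖^2)^(k+1))⁻¹) * k / (2 * (k+1))) ^ ((2:ℝ)/(k+2))
      * (∫ x, φ x ^ (2 * ((k:ℝ)+2) / k)) ^ ((k:ℝ)/(k+2)) ≤ ∫ x, ‖fderiv ℝ φ x‖^2 := by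
  have hk0 : (0:ℝ) < k := by exact_mod_cast hk
  have htop : (((⊤:ℕ∞):WithTop ℕ∞)) ≠ 0 := by simp
  have i1 : Integrable fun x => ‖fderiv ℝ φ x‖^2 := by
    have hc : Continuous fun x => ‖fderiv ℝ φ x‖^2 := ((hφ.continuous_fderiv htop).norm.pow 2)
    refine hc.integrable_of_hasCompactSupport ?_
    refine (hcs.fderiv ℝ).mono fun x hx => ?_
    rw [Function.mem_support] at hx ⊢
    intro h; apply hx; rw [h]; simp
  have i2 : Integrable fun x : EuclideanSpace ℝ (Fin (k+2)) => ‖fderiv ℝ (bub k) x‖^2 := by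
    refine ((japan (k := k+2) (p := k+1) (by omega)).const_mul ((k:ℝ)^2)).mono'
      (((bub_contDiff.continuous_fderiv htop).norm.pow 2).aestronglyMeasurable) (Filter.Eventually.of_forall fun x => ?_)
    rw [Real.norm_of_nonneg (by positivity)]
    exact bub_fderiv x
  refine ge_of_tendsto (x := nhdsWithin 0 (Set.Ioi 0)) (f := fun ε : ℝ =>
    (1 + ε) * (∫ x, ‖fderiv ℝ φ x‖^2) + (ε^2 + ε) * ∫ x : EuclideanSpace ℝ (Fin (k+2)), ‖fderiv ℝ (bub k) x‖^2) ?_ ?_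
  · have : Continuous (fun ε : ℝ =>
      (1 + ε) * (∫ x, ‖fderiv ℝ φ x‖^2) + (ε^2 + ε) * ∫ x : EuclideanSpace ℝ (Fin (k+2)), ‖fderiv ℝ (bub k) x‖^2) := by fun_prop
    simpa using (this.tendsto 0).mono_left (nhdsWithin_le_nhds (s := Set.Ioi 0))
  · filter_upwards [self_mem_nhdsWithin] with ε hε
    have hε : 0 < ε := hε
    obtain ⟨iN, h⟩ := sob_eps hk hφ hcs h0 hε
    refine le_trans ?_ (h.trans ?_)
    · have : ∫ x, φ x ^ (2 * ((k:ℝ)+2) / k) ≤ ∫ x, (φ x + ε * bub k x) ^ (2 * ((k:ℝ)+2) / k) := by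
        refine integral_mono_of_nonneg (Filter.Eventually.of_forall fun x => ?_) iN (Filter.Eventually.of_forall fun x => ?_)
        · have := h0 x; simp only [Pi.zero_apply]; positivity
        · have := h0 x
          have := bub_pos (k := k) x
          simp only
          gcongr
          nlinarith
      have h9 := kap_nonneg (k+2) (k+1)
      have : 0 ≤ ∫ x, φ x ^ (2 * ((k:ℝ)+2) / k) := integral_nonneg fun x => by have := h0 x; positivity
      gcongr
    · rw [← integral_const_mul, ← integral_const_mul, ← integral_add (i1.const_mul _) (i2.const_mul _)]
      refine integral_mono_of_nonneg (Filter.Eventually.of_forall fun x => by simp only [Pi.zero_apply]; positivity)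
        ((i1.const_mul _).add (i2.const_mul _)) (Filter.Eventually.of_forall fun x => ?_)
      have e : fderiv ℝ (fun x => φ x + ε * bub k x) x = fderiv ℝ φ x + ε • fderiv ℝ (bub k) x :=
        (((hφ.differentiable htop) x).hasFDerivAt.add (((bub_contDiff.differentiable htop) x).hasFDerivAt.const_mul ε)).fderiv
      simp only [Pi.add_apply]
      rw [e]
      have h1 := norm_add_le (fderiv ℝ φ x) (ε • fderiv ℝ (bub k) x)
      rw [norm_smul, Real.norm_of_nonneg hε.le] at h1
      have h2 := pow_le_pow_left₀ (norm_nonneg _) h1 2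
      refine h2.trans ?_
      nlinarith [mul_nonneg hε.le (sq_nonneg (‖fderiv ℝ φ x‖ - ‖fderiv ℝ (bub k) x‖))]

end ISP


namespace ISP

lemma lint_gamma {a r : ℝ} (ha : 0 < a) (hr : 0 < r) :
    ∫⁻ t in Set.Ioi (0:ℝ), ENNReal.ofReal (t ^ (a - 1) * Real.exp (-(r * t))) = ENNReal.ofReal ((1 / r) ^ a * Real.Gamma a) := by
  have h := Real.integral_rpow_mul_exp_neg_mul_Ioi ha hr
  have hpos : 0 < (1 / r) ^ a * Real.Gamma a := mul_pos (by positivity) (Real.Gamma_pos_of_pos ha)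
  rw [← h, ofReal_integral_eq_lintegral_ofReal]
  · by_contra hn
    rw [integral_undef hn] at h
    linarith
  · filter_upwards [ae_restrict_mem measurableSet_Ioi] with t ht
    have : 0 < t := ht
    simp only [Pi.zero_apply]
    positivity

lemma lint_gauss {n : ℕ} {b : ℝ} (hb : 0 < b) :
    ∫⁻ y : EuclideanSpace ℝ (Fin n), ENNReal.ofReal (Real.exp (-b * ‖y‖^2)) = ENNReal.ofReal ((π / b) ^ ((n:ℝ)/2)) := by
  have h := GaussianFourier.integral_rexp_neg_mul_sq_norm (V := EuclideanSpace ℝ (Fin n)) hb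
  rw [finrank_euclideanSpace, Fintype.card_fin] at h
  have hpos : 0 < (π / b) ^ ((n:ℝ)/2) := by positivity
  rw [← h, ofReal_integral_eq_lintegral_ofReal]
  · by_contra hn
    rw [integral_undef hn] at h
    linarith
  · exact Filter.Eventually.of_forall fun y => by simp only [Pi.zero_apply]; positivity

lemma kap_val {n p : ℕ} (h : n < 2 * p) (hp : 1 ≤ p):
    ∫ y : EuclideanSpace ℝ (Fin n), ((1 + ‖y‖^2)^p)⁻¹ = π ^ ((n:ℝ)/2) * Real.Gamma (p - (n:ℝ)/2) / Real.Gamma p := by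
  have hp0 : (0:ℝ) < p := by exact_mod_cast hp
  have hpn : (0:ℝ) < p - (n:ℝ)/2 := by
    have : (n:ℝ) < 2 * p := by exact_mod_cast h
    linarith
  have hG := Real.Gamma_pos_of_pos hp0
  have hG2 := Real.Gamma_pos_of_pos hpn
  have e1 : ∫⁻ y : EuclideanSpace ℝ (Fin n), ENNReal.ofReal (((1 + ‖y‖^2)^p)⁻¹ * Real.Gamma p) =
      ENNReal.ofReal (π ^ ((n:ℝ)/2) * Real.Gamma (p - (n:ℝ)/2)) := by
    calc _ = ∫⁻ y : EuclideanSpace ℝ (Fin n), ∫⁻ t in Set.Ioi (0:ℝ), ENNReal.ofReal (t ^ ((p:ℝ) - 1) * Real.exp (-((1 + ‖y‖^2) * t))) := by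
          congr 1; ext y
          rw [lint_gamma hp0 (by positivity), one_div, Real.inv_rpow (by positivity), Real.rpow_natCast]
      _ = ∫⁻ t in Set.Ioi (0:ℝ), ∫⁻ y : EuclideanSpace ℝ (Fin n), ENNReal.ofReal (t ^ ((p:ℝ) - 1) * Real.exp (-((1 + ‖y‖^2) * t))) := by
          rw [lintegral_lintegral_swap]
          refine Measurable.aemeasurable ?_
          unfold Function.uncurry
          fun_prop
      _ = ∫⁻ t in Set.Ioi (0:ℝ), ENNReal.ofReal (π ^ ((n:ℝ)/2)) * ENNReal.ofReal (t ^ ((p - (n:ℝ)/2) - 1) * Real.exp (-(1 * t))) := by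
          refine setLIntegral_congr_fun measurableSet_Ioi fun t ht => ?_
          have ht : 0 < t := ht
          have : ∀ y : EuclideanSpace ℝ (Fin n), ENNReal.ofReal (t ^ ((p:ℝ) - 1) * Real.exp (-((1 + ‖y‖^2) * t))) =
            ENNReal.ofReal (t ^ ((p:ℝ) - 1) * Real.exp (-t)) * ENNReal.ofReal (Real.exp (-t * ‖y‖^2)) := by
            intro y
            rw [← ENNReal.ofReal_mul (by positivity), mul_assoc, ← Real.exp_add]
            congr 3; ring
          simp only [this]
          rw [lintegral_const_mul _ (by fun_prop), lint_gauss ht, ← ENNReal.ofReal_mul (by positivity), ← ENNReal.ofReal_mul (by positivity)]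
          congr 1
          rw [Real.div_rpow (by positivity) ht.le, show (p:ℝ) - n/2 - 1 = (p - 1) - n/2 by ring, Real.rpow_sub ht _ ((n:ℝ)/2), one_mul]
          ring
      _ = _ := by
          rw [lintegral_const_mul _ (by fun_prop), lint_gamma hpn one_pos, ← ENNReal.ofReal_mul (by positivity)]
          simp
  rw [← ofReal_integral_eq_lintegral_ofReal ((japan h).mul_const _) (Filter.Eventually.of_forall fun y => by simp only [Pi.zero_apply]; positivity),
    integral_mul_const, ENNReal.ofReal_eq_ofReal_iff (mul_nonneg (kap_nonneg _ _) hG.le) (by positivity)] at e1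
  rw [eq_div_iff hG.ne', e1]

lemma sob_const {k : ℕ} (hk : 1 ≤ k) : sobolevConst (k+2) * ((k+2 : ℝ) * k * ((∫ y : EuclideanSpace ℝ (Fin (k+2)), ((1 + ‖y‖^2)^(k+1))⁻¹) * k / (2 * (k+1))) ^ ((2:ℝ)/(k+2))) = 1 := by
  have hk0 : (0:ℝ) < k := by exact_mod_cast hk
  rw [kap_val (by omega) (by omega)]
  have e1 : Real.Gamma (((k+2:ℕ):ℝ)) = (k+1) * Real.Gamma ((k+1:ℕ):ℝ) := by
    push_cast
    rw [← Real.Gamma_add_one (by positivity)]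
    congr 1; ring
  have e2 : Real.Gamma (((k+2:ℕ):ℝ)/2) = k/2 * Real.Gamma (((k+1:ℕ):ℝ) - ((k+2:ℕ):ℝ)/2) := by
    rw [show ((k+1:ℕ):ℝ) - ((k+2:ℕ):ℝ)/2 = k/2 by push_cast; ring, ← Real.Gamma_add_one (by positivity)]
    congr 1; push_cast; ring
  unfold sobolevConst
  have g1 := Real.Gamma_pos_of_pos (show (0:ℝ) < ((k+2:ℕ):ℝ) by positivity)
  have g2 := Real.Gamma_pos_of_pos (show (0:ℝ) < ((k+2:ℕ):ℝ)/2 by positivity)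
  have g3 := Real.Gamma_pos_of_pos (show (0:ℝ) < ((k+1:ℕ):ℝ) by positivity)
  have e3 : π ^ (((k+2:ℕ):ℝ)/2) * Real.Gamma (((k+1:ℕ):ℝ) - ((k+2:ℕ):ℝ)/2) / Real.Gamma ((k+1:ℕ):ℝ) * k / (2 * (k+1)) =
      π ^ (((k:ℝ)+2)/2) * (Real.Gamma (((k+2:ℕ):ℝ)/2) / Real.Gamma ((k+2:ℕ):ℝ)) := by
    rw [e1, e2]; push_cast; field_simp
  rw [e3, Real.mul_rpow (by positivity) (by positivity), ← Real.rpow_mul (by positivity), show ((k:ℝ)+2)/2 * (2/(k+2)) = 1 by field_simp, Real.rpow_one]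
  have e4 : (Real.Gamma ((k+2:ℕ):ℝ) / Real.Gamma (((k+2:ℕ):ℝ)/2)) ^ ((2:ℝ)/(k+2)) * (Real.Gamma (((k+2:ℕ):ℝ)/2) / Real.Gamma ((k+2:ℕ):ℝ)) ^ ((2:ℝ)/(k+2)) = 1 := by
    rw [← Real.mul_rpow (by positivity) (by positivity), div_mul_div_cancel₀ g2.ne', div_self g1.ne', Real.one_rpow]
  have e5 : ((k+2:ℕ):ℝ) = k + 2 := by push_cast; ring
  rw [show (2:ℝ) / ((k+2:ℕ):ℝ) = 2/(k+2) by rw [e5]]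
  generalize (Real.Gamma ((k+2:ℕ):ℝ) / Real.Gamma (((k+2:ℕ):ℝ)/2)) ^ ((2:ℝ)/(k+2)) = a at *
  generalize (Real.Gamma (((k+2:ℕ):ℝ)/2) / Real.Gamma ((k+2:ℕ):ℝ)) ^ ((2:ℝ)/(k+2)) = b at *
  rw [e5, show (k:ℝ) + 2 - 2 = k by ring]
  have := Real.pi_pos
  calc _ = a * b := by field_simp
    _ = 1 := e4

lemma sob_smooth' {k : ℕ} (hk : 1 ≤ k) {φ : EuclideanSpace ℝ (Fin (k+2)) → ℝ}
    (hφ : ContDiff ℝ ((⊤:ℕ∞):WithTop ℕ∞) φ) (hcs : HasCompactSupport φ) (h0 : ∀ x, 0 ≤ φ x) :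
    (∫ x, φ x ^ (2 * ((k:ℝ)+2) / k)) ^ ((k:ℝ)/(k+2)) ≤ sobolevConst (k+2) * ∫ x, ‖fderiv ℝ φ x‖^2 := by
  have h1 := sob_smooth hk hφ hcs h0
  have h2 := sob_const hk
  have hk0 : (0:ℝ) < k := by exact_mod_cast hk
  have h3 : 0 ≤ sobolevConst (k+2) := by
    unfold sobolevConst
    have g1 := Real.Gamma_pos_of_pos (show (0:ℝ) < ((k+2:ℕ):ℝ) by positivity)
    have g2 := Real.Gamma_pos_of_pos (show (0:ℝ) < ((k+2:ℕ):ℝ)/2 by positivity)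
    have : (0:ℝ) ≤ ((k+2:ℕ):ℝ) - 2 := by push_cast; linarith
    positivity
  have := mul_le_mul_of_nonneg_left h1 h3
  rw [← mul_assoc, h2, one_mul] at this
  exact this

end ISP


namespace ISP

section moll
variable {n : ℕ}

lemma integrable_fderiv_of_sq {w : EuclideanSpace ℝ (Fin n) → ℝ} (hcs : HasCompactSupport w)
    (hi : Integrable fun x => ‖fderiv ℝ w x‖^2) : Integrable (fderiv ℝ w) := by
  have h1 : Integrable (Set.indicator (tsupport w) fun _ => (1:ℝ)) :=
    (integrable_indicator_iff (isClosed_tsupport w).measurableSet).mpr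
      (integrableOn_const (by exact hcs.isCompact.measure_lt_top.ne))
  refine (hi.add h1).mono' (measurable_fderiv ℝ w).aestronglyMeasurable (Filter.Eventually.of_forall fun x => ?_)
  by_cases hx : x ∈ tsupport w
  · simp only [Pi.add_apply, Set.indicator_of_mem hx]
    nlinarith [sq_nonneg (‖fderiv ℝ w x‖ - 1)]
  · have : fderiv ℝ w x = 0 := by
      by_contra h
      exact hx (support_fderiv_subset ℝ h)
    simp only [Pi.add_apply, Set.indicator_of_notMem hx, this]
    simp

lemma conv_fderiv {η w : EuclideanSpace ℝ (Fin n) → ℝ} (hηd : ContDiff ℝ ((⊤:ℕ∞):WithTop ℕ∞) η) (hηs : HasCompactSupport η)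
    (hw : LocallyIntegrable w) (x v : EuclideanSpace ℝ (Fin n)) :
    fderiv ℝ (convolution η w (ContinuousLinearMap.lsmul ℝ ℝ) volume) x v = ∫ y, fderiv ℝ η y v * w (x - y) := by
  have hη1' : ContDiff ℝ 1 η := hηd.of_le (WithTop.coe_le_coe.mpr le_top)
  have hDη : Continuous (fderiv ℝ η) := hηd.continuous_fderiv (by simp)
  have h1 := (hηs.hasFDerivAt_convolution_left (μ := volume) (ContinuousLinearMap.lsmul ℝ ℝ) hη1' hw x).fderiv
  have i1 := (hηs.fderiv ℝ).convolutionExists_left (μ := volume) (ContinuousLinearMap.precompL (EuclideanSpace ℝ (Fin n)) (ContinuousLinearMap.lsmul ℝ ℝ)) hDη hw x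
  rw [h1, convolution_def, ContinuousLinearMap.integral_apply i1]
  simp only [ContinuousLinearMap.precompL_apply, ContinuousLinearMap.lsmul_apply, smul_eq_mul]

lemma mollify {w : EuclideanSpace ℝ (Fin n) → ℝ} (hd : Differentiable ℝ w) (hcs : HasCompactSupport w)
    (h0 : ∀ x, 0 ≤ w x) (hi : Integrable fun x => ‖fderiv ℝ w x‖^2) (b : ContDiffBump (0 : EuclideanSpace ℝ (Fin n))) :
    let W := convolution (b.normed volume) w (ContinuousLinearMap.lsmul ℝ ℝ) volume
    ContDiff ℝ ((⊤:ℕ∞):WithTop ℕ∞) W ∧ HasCompactSupport W ∧ (∀ x, 0 ≤ W x) ∧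
      ∫ x, ‖fderiv ℝ W x‖^2 ≤ ∫ x, ‖fderiv ℝ w x‖^2 := by
  intro W
  have hwi : Integrable w := hd.continuous.integrable_of_hasCompactSupport hcs
  have hη0 : ∀ x, 0 ≤ b.normed volume x := fun x => b.nonneg_normed x
  have hηc : Continuous (b.normed volume) := b.continuous_normed
  have hηs : HasCompactSupport (b.normed volume) := b.hasCompactSupport_normed
  have hηd : ContDiff ℝ ((⊤:ℕ∞):WithTop ℕ∞) (b.normed volume) := b.contDiff_normed
  have hηi : Integrable (b.normed volume) := b.integrable_normed
  have hη1 : ∫ x, b.normed volume x = 1 := b.integral_normed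
  set η := b.normed (volume : Measure (EuclideanSpace ℝ (Fin n))) with hη
  obtain ⟨A, hA⟩ := hηc.bounded_above_of_compact_support hηs
  have hDi := integrable_fderiv_of_sq hcs hi
  have hη1' : ContDiff ℝ 1 η := hηd.of_le (WithTop.coe_le_coe.mpr le_top)
  -- integrability of η times translated things
  have key : ∀ (g : EuclideanSpace ℝ (Fin n) → ℝ), Integrable g → ∀ x, Integrable fun y => η y * g (x - y) := by
    intro g hg x
    refine (hg.comp_sub_left x).bdd_mul (c := A) hηc.aestronglyMeasurable (Filter.Eventually.of_forall hA)
  refine ⟨hηs.contDiff_convolution_left _ hηd hwi.locallyIntegrable, hηs.convolution _ hcs, fun x => ?_, ?_⟩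
  · exact integral_nonneg fun y => mul_nonneg (hη0 y) (h0 _)
  have hder : ∀ x v, fderiv ℝ W x v = ∫ y, η y * fderiv ℝ w (x - y) v := by
    intro x v
    have hDη : Continuous (fderiv ℝ η) := hηd.continuous_fderiv (by simp)
    obtain ⟨A', hA'⟩ := hDη.bounded_above_of_compact_support (hηs.fderiv ℝ)
    have h2 : fderiv ℝ W x v = ∫ y, fderiv ℝ η y v * w (x - y) := conv_fderiv hηd hηs hwi.locallyIntegrable x v
    have hg : ∀ y, fderiv ℝ (fun y => w (x - y)) y = - fderiv ℝ w (x - y) := by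
      intro y
      have := (hd (x - y)).hasFDerivAt.comp y ((hasFDerivAt_id y).const_sub x)
      have e := this.fderiv
      simp only [Function.comp_def, id] at e
      rw [e]
      ext v; simp
    have ibp := integral_mul_fderiv_eq_neg_fderiv_mul_of_integrable (μ := (volume : Measure (EuclideanSpace ℝ (Fin n)))) (f := η) (g := fun y => w (x - y)) (v := v) ?_ ?_ (key w hwi x)
      (fun y _ => (hηd.differentiable (by simp)) y) (fun y _ => by fun_prop)
    · simp only [hg, ContinuousLinearMap.neg_apply, mul_neg, integral_neg] at ibp
      rw [h2]
      linarith
    · refine (hwi.comp_sub_left x).bdd_mul (c := A' * ‖v‖) (by fun_prop) (Filter.Eventually.of_forall fun y => ?_)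
      exact (ContinuousLinearMap.le_opNorm _ _).trans (by gcongr; exact hA' y)
    · simp only [hg, ContinuousLinearMap.neg_apply, mul_neg]
      exact (key _ (hDi.apply_continuousLinearMap v) x).neg
  have hn : ∀ x, ‖fderiv ℝ W x‖ ≤ ∫ y, η y * ‖fderiv ℝ w (x - y)‖ := by
    intro x
    refine ContinuousLinearMap.opNorm_le_bound _ (integral_nonneg fun y => mul_nonneg (hη0 y) (norm_nonneg _)) fun v => ?_
    rw [hder, ← integral_mul_const]
    refine norm_integral_le_of_norm_le ((key _ hDi.norm x).mul_const _) (Filter.Eventually.of_forall fun y => ?_)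
    rw [norm_mul, Real.norm_of_nonneg (hη0 y), mul_assoc]
    exact mul_le_mul_of_nonneg_left (ContinuousLinearMap.le_opNorm _ _) (hη0 y)
  have hsq : ∀ x, ‖fderiv ℝ W x‖^2 ≤ ∫ y, η y * ‖fderiv ℝ w (x - y)‖^2 := by
    intro x
    set c := ∫ y, η y * ‖fderiv ℝ w (x - y)‖ with hc
    have i1 := key _ hDi.norm x
    have i2 := key _ hi x
    have h3 : 0 ≤ ∫ y, (η y * ‖fderiv ℝ w (x - y)‖^2 - 2 * c * (η y * ‖fderiv ℝ w (x - y)‖) + c^2 * η y) := by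
      refine integral_nonneg fun y => ?_
      have : η y * ‖fderiv ℝ w (x - y)‖^2 - 2 * c * (η y * ‖fderiv ℝ w (x - y)‖) + c^2 * η y = η y * (‖fderiv ℝ w (x - y)‖ - c)^2 := by ring
      simp only [Pi.zero_apply]
      rw [this]
      exact mul_nonneg (hη0 y) (sq_nonneg _)
    have i3 : Integrable fun y => η y * ‖fderiv ℝ w (x - y)‖^2 - 2 * c * (η y * ‖fderiv ℝ w (x - y)‖) := i2.sub (i1.const_mul _)
    rw [integral_add i3 (hηi.const_mul _), integral_sub i2 (i1.const_mul _), integral_const_mul, integral_const_mul, hη1, ← hc] at h3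
    have := pow_le_pow_left₀ (norm_nonneg _) (hn x) 2
    nlinarith
  have ic : Integrable (convolution η (fun x => ‖fderiv ℝ w x‖^2) (ContinuousLinearMap.lsmul ℝ ℝ) volume) :=
    hηi.integrable_convolution _ hi
  have ec := integral_convolution (μ := (volume : Measure (EuclideanSpace ℝ (Fin n)))) (ν := volume) (ContinuousLinearMap.lsmul ℝ ℝ) hηi hi
  rw [hη1] at ec
  simp only [map_one, ContinuousLinearMap.lsmul_apply, one_smul] at ec
  rw [← ec]
  exact integral_mono_of_nonneg (Filter.Eventually.of_forall fun x => by simp only [Pi.zero_apply]; positivity) ic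
    (Filter.Eventually.of_forall hsq)

/-- Fatou-type lemma -/
lemma fatou_pow {μ : Measure (EuclideanSpace ℝ (Fin n))} {p : ℝ} (hp : 0 ≤ p) {φ : ℕ → EuclideanSpace ℝ (Fin n) → ℝ}
    {u : EuclideanSpace ℝ (Fin n) → ℝ} (hφ : ∀ j, Continuous (φ j)) (hlim : ∀ x, Filter.Tendsto (fun j => φ j x) Filter.atTop (nhds (u x)))
    {B : ENNReal} {b : ℕ → ENNReal} (hb : Filter.Tendsto b Filter.atTop (nhds B)) (h : ∀ j, ∫⁻ x, ENNReal.ofReal (φ j x ^ p) ∂μ ≤ b j) :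
    ∫⁻ x, ENNReal.ofReal (u x ^ p) ∂μ ≤ B := by
  have h1 := lintegral_liminf_le (μ := μ) (u := Filter.atTop) (f := fun j x => ENNReal.ofReal (φ j x ^ p)) (fun j => by
    have := (hφ j).measurable; fun_prop)
  have h2 : ∀ x, Filter.liminf (fun j => ENNReal.ofReal (φ j x ^ p)) Filter.atTop = ENNReal.ofReal (u x ^ p) := by
    intro x
    refine Filter.Tendsto.liminf_eq ?_
    exact ENNReal.tendsto_ofReal ((hlim x).rpow_const (Or.inr hp))
  simp only [h2] at h1
  refine h1.trans ?_
  rw [← hb.liminf_eq]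
  exact Filter.liminf_le_liminf (Filter.Eventually.of_forall h)

lemma ext_cs {μ : Measure (EuclideanSpace ℝ (Fin n))} {p : ℝ} (hp : 0 ≤ p) {A c : ℝ} (hA : 0 ≤ A) (hc : 0 ≤ c)
    (H : ∀ φ : EuclideanSpace ℝ (Fin n) → ℝ, ContDiff ℝ ((⊤:ℕ∞):WithTop ℕ∞) φ → HasCompactSupport φ → (∀ x, 0 ≤ φ x) →
      ∫⁻ x, ENNReal.ofReal (φ x ^ p) ∂μ ≤ ENNReal.ofReal (A * (∫ x, ‖fderiv ℝ φ x‖^2) ^ c))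
    {w : EuclideanSpace ℝ (Fin n) → ℝ} (hd : Differentiable ℝ w) (hcs : HasCompactSupport w)
    (h0 : ∀ x, 0 ≤ w x) (hi : Integrable fun x => ‖fderiv ℝ w x‖^2) :
    ∫⁻ x, ENNReal.ofReal (w x ^ p) ∂μ ≤ ENNReal.ofReal (A * (∫ x, ‖fderiv ℝ w x‖^2) ^ c) := by
  let b : ℕ → ContDiffBump (0 : EuclideanSpace ℝ (Fin n)) := fun j =>
    { rIn := 1 / (2 * ((j:ℝ) + 1)), rOut := 1 / ((j:ℝ) + 1), rIn_pos := by positivity,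
      rIn_lt_rOut := by gcongr; linarith [show (0:ℝ) ≤ j by positivity] }
  have hb : Filter.Tendsto (fun j => (b j).rOut) Filter.atTop (nhds 0) := tendsto_one_div_add_atTop_nhds_zero_nat
  have hm := fun j => mollify hd hcs h0 hi (b j)
  refine fatou_pow hp (φ := fun j => convolution ((b j).normed volume) w (ContinuousLinearMap.lsmul ℝ ℝ) volume)
    (fun j => (hm j).1.continuous) (fun x => ContDiffBump.convolution_tendsto_right_of_continuous hb hd.continuous x)
    tendsto_const_nhds (fun j => ?_)
  refine (H _ (hm j).1 (hm j).2.1 (hm j).2.2.1).trans (ENNReal.ofReal_le_ofReal ?_)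
  have := (hm j).2.2.2
  gcongr
  

end moll
end ISP


namespace ISP

lemma cutoff_exists (n : ℕ) : ∃ (Cb : ℝ) (χ : ℝ → EuclideanSpace ℝ (Fin n) → ℝ), 0 ≤ Cb ∧ ∀ R : ℝ, 0 < R →
    ContDiff ℝ ((⊤:ℕ∞):WithTop ℕ∞) (χ R) ∧ HasCompactSupport (χ R) ∧ (∀ x, 0 ≤ χ R x ∧ χ R x ≤ 1) ∧
    (∀ x, ‖x‖ ≤ R → χ R x = 1) ∧ ∀ x, ‖fderiv ℝ (χ R) x‖^2 ≤
      Cb * Set.indicator ({x | R ≤ ‖x‖} ∩ Metric.closedBall 0 (2 * R)) (fun _ => (R^2)⁻¹) x := by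
  let b : ContDiffBump (0 : EuclideanSpace ℝ (Fin n)) := { rIn := 1, rOut := 2, rIn_pos := by norm_num, rIn_lt_rOut := by norm_num }
  have hb : ContDiff ℝ ((⊤:ℕ∞):WithTop ℕ∞) b := b.contDiff
  have hDb : Continuous (fderiv ℝ b) := hb.continuous_fderiv (by simp)
  have hs : HasCompactSupport b := b.hasCompactSupport
  obtain ⟨A, hA⟩ := hDb.bounded_above_of_compact_support (hs.fderiv ℝ)
  refine ⟨A^2, fun R x => b (R⁻¹ • x), by positivity, fun R hR => ⟨hb.comp (contDiff_const_smul _), hs.comp_smul (inv_ne_zero hR.ne'),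
    fun x => ⟨b.nonneg, b.le_one⟩, fun x hx => ?_, fun x => ?_⟩⟩
  · apply b.one_of_mem_closedBall
    rw [mem_closedBall_zero_iff, norm_smul, norm_inv, Real.norm_of_nonneg hR.le]
    show R⁻¹ * ‖x‖ ≤ 1
    rw [inv_mul_le_iff₀ hR]; linarith
  · have h1 : fderiv ℝ (fun x => b (R⁻¹ • x)) x = R⁻¹ • fderiv ℝ b (R⁻¹ • x) := by
      have := ((hb.differentiable (by simp)) (R⁻¹ • x)).hasFDerivAt.comp x ((hasFDerivAt_id x).const_smul R⁻¹)
      have e := this.fderiv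
      simp only [Function.comp_def, Pi.smul_apply, id] at e
      rw [show (fun x => b (R⁻¹ • x)) = fun x => b ((R⁻¹ • id) x) from rfl]
      rw [show (fun x => b ((R⁻¹ • id) x)) = fun x => b (R⁻¹ • x) from rfl, e]
      ext v; simp
    rw [h1]
    by_cases hx : x ∈ {x | R ≤ ‖x‖} ∩ Metric.closedBall 0 (2 * R)
    · rw [Set.indicator_of_mem hx, norm_smul, norm_inv, Real.norm_of_nonneg hR.le, mul_pow, inv_pow, mul_comm]
      have := hA (R⁻¹ • x)
      gcongr
    · rw [Set.indicator_of_notMem hx]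
      have hz : fderiv ℝ b (R⁻¹ • x) = 0 := by
        rw [Set.mem_inter_iff, not_and_or] at hx
        have hnorm : ‖R⁻¹ • x‖ = R⁻¹ * ‖x‖ := by rw [norm_smul, norm_inv, Real.norm_of_nonneg hR.le]
        rcases hx with hx | hx
        · have hx : ‖x‖ < R := not_le.mp hx
          have : b =ᶠ[nhds (R⁻¹ • x)] fun _ => 1 := by
            have hm : R⁻¹ • x ∈ Metric.ball (0:EuclideanSpace ℝ (Fin n)) 1 := by
              rw [mem_ball_zero_iff, hnorm, inv_mul_lt_iff₀ hR]; linarith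
            filter_upwards [Metric.isOpen_ball.mem_nhds hm] with y hy
            exact b.one_of_mem_closedBall (Metric.ball_subset_closedBall hy)
          rw [this.fderiv_eq]; simp
        · rw [mem_closedBall_zero_iff, not_le] at hx
          have : b =ᶠ[nhds (R⁻¹ • x)] fun _ => 0 := by
            have hm : R⁻¹ • x ∈ {y : EuclideanSpace ℝ (Fin n) | 2 < ‖y‖} := by
              rw [Set.mem_setOf_eq, hnorm, lt_inv_mul_iff₀ hR]; linarith
            filter_upwards [(isOpen_lt continuous_const continuous_norm).mem_nhds hm] with y hy
            apply b.zero_of_le_dist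
            rw [dist_zero_right]
            exact le_of_lt hy
          rw [this.fderiv_eq]; simp
      rw [hz]; simp

lemma tail_zero {n : ℕ} {g : EuclideanSpace ℝ (Fin n) → ℝ} (hg : Integrable g) :
    Filter.Tendsto (fun j : ℕ => ∫ x in {x | (j:ℝ) + 1 ≤ ‖x‖}, g x) Filter.atTop (nhds 0) := by
  have h := tendsto_setIntegral_of_antitone (μ := volume) (f := g) (s := fun j : ℕ => {x : EuclideanSpace ℝ (Fin n) | (j:ℝ) + 1 ≤ ‖x‖})
    (fun j => measurableSet_le measurable_const measurable_norm) (fun i j hij x hx => ?_) ⟨0, hg.integrableOn⟩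
  · have : ⋂ j : ℕ, {x : EuclideanSpace ℝ (Fin n) | (j:ℝ) + 1 ≤ ‖x‖} = ∅ := by
      ext x
      simp only [Set.mem_iInter, Set.mem_setOf_eq, Set.mem_empty_iff_false, iff_false, not_forall, not_le]
      obtain ⟨j, hj⟩ := exists_nat_gt ‖x‖
      exact ⟨j, by linarith⟩
    rw [this] at h
    simpa using h
  · have : (i:ℝ) ≤ j := by exact_mod_cast hij
    simp only [Set.mem_setOf_eq] at hx ⊢
    linarith

lemma young_k {k : ℕ} (hk : 1 ≤ k) {u R θ : ℝ} (hu : 0 ≤ u) (hR : 0 < R) (hθ : 0 < θ) :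
    u^2 * (R^2)⁻¹ ≤ (θ⁻¹) ^ (((k:ℝ)+2)/k) * u ^ (2 * ((k:ℝ)+2)/k) + θ ^ (((k:ℝ)+2)/2) * (R^(k+2))⁻¹ := by
  have hk0 : (0:ℝ) < k := by exact_mod_cast hk
  have hpq : (((k:ℝ)+2)/k).HolderConjugate (((k:ℝ)+2)/2) := by
    rw [Real.holderConjugate_iff]
    constructor
    · rw [lt_div_iff₀ hk0]; linarith
    · field_simp
  have y := Real.young_inequality_of_nonneg (a := θ⁻¹ * u^2) (b := θ * (R^2)⁻¹) (by positivity) (by positivity) hpq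
  have e1 : (θ⁻¹ * u^2) * (θ * (R^2)⁻¹) = u^2 * (R^2)⁻¹ := by field_simp
  rw [e1, Real.mul_rpow (by positivity) (by positivity), Real.mul_rpow (by positivity) (by positivity)] at y
  have e2 : (u^2) ^ (((k:ℝ)+2)/k) = u ^ (2 * ((k:ℝ)+2)/k) := by
    rw [← Real.rpow_natCast, ← Real.rpow_mul hu]; congr 1; push_cast; ring
  have e3 : ((R^2)⁻¹) ^ (((k:ℝ)+2)/2) = (R^(k+2))⁻¹ := by
    rw [Real.inv_rpow (by positivity), ← Real.rpow_natCast, ← Real.rpow_mul hR.le, ← Real.rpow_natCast]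
    congr 2; push_cast; ring
  rw [e2, e3] at y
  refine y.trans (add_le_add (div_le_self (by positivity) ?_) (div_le_self (by positivity) ?_))
  · rw [le_div_iff₀ hk0]; linarith
  · rw [le_div_iff₀ two_pos]; linarith

lemma ext_D {k : ℕ} (hk : 1 ≤ k) {μ : Measure (EuclideanSpace ℝ (Fin (k+2)))} {p : ℝ} (hp : 0 ≤ p) {A c : ℝ} (hA : 0 ≤ A) (hc : 0 ≤ c)
    (H : ∀ φ : EuclideanSpace ℝ (Fin (k+2)) → ℝ, ContDiff ℝ ((⊤:ℕ∞):WithTop ℕ∞) φ → HasCompactSupport φ → (∀ x, 0 ≤ φ x) →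
      ∫⁻ x, ENNReal.ofReal (φ x ^ p) ∂μ ≤ ENNReal.ofReal (A * (∫ x, ‖fderiv ℝ φ x‖^2) ^ c))
    {u : EuclideanSpace ℝ (Fin (k+2)) → ℝ} (hd : Differentiable ℝ u)
    (h0 : ∀ x, 0 ≤ u x) (hi : Integrable fun x => ‖fderiv ℝ u x‖^2) (hL : Integrable fun x => u x ^ (2 * ((k:ℝ)+2)/k)) :
    ∫⁻ x, ENNReal.ofReal (u x ^ p) ∂μ ≤ ENNReal.ofReal (A * (∫ x, ‖fderiv ℝ u x‖^2) ^ c) := by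
  obtain ⟨Cb, χ, hCb, hχ⟩ := cutoff_exists (k+2)
  set G := ∫ x, ‖fderiv ℝ u x‖^2 with hG
  set V := (2:ℝ)^(k+2) * (volume : Measure (EuclideanSpace ℝ (Fin (k+2)))).real (Metric.ball 0 1) with hV
  have hV0 : 0 ≤ V := by positivity
  have step1 : ∀ ε θ R : ℝ, 0 < ε → 0 < θ → 0 < R → ∫⁻ x, ENNReal.ofReal ((χ R x * u x) ^ p) ∂μ ≤
      ENNReal.ofReal (A * ((1 + ε) * G + (1 + ε⁻¹) * (Cb * ((θ⁻¹) ^ (((k:ℝ)+2)/k) * (∫ x in {x | R ≤ ‖x‖}, u x ^ (2 * ((k:ℝ)+2)/k)) + θ ^ (((k:ℝ)+2)/2) * V))) ^ c) := by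
    intro ε θ R hε hθ hR
    obtain ⟨c1, c2, c3, c4, c5⟩ := hχ R hR
    have hwd : Differentiable ℝ fun x => χ R x * u x := (c1.differentiable (by simp)).mul hd
    have hws : HasCompactSupport fun x => χ R x * u x := c2.mul_right
    have mA : MeasurableSet {x : EuclideanSpace ℝ (Fin (k+2)) | R ≤ ‖x‖} := measurableSet_le measurable_const measurable_norm
    have mB : MeasurableSet (Metric.closedBall (0:EuclideanSpace ℝ (Fin (k+2))) (2*R)) := measurableSet_closedBall
    set a1 := (θ⁻¹) ^ (((k:ℝ)+2)/k) with ha1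
    set a2 := θ ^ (((k:ℝ)+2)/2) * (R^(k+2))⁻¹ with ha2
    have ha1p : 0 < a1 := by positivity
    have ha2p : 0 < a2 := by positivity
    set bd : EuclideanSpace ℝ (Fin (k+2)) → ℝ := fun x => (1 + ε) * ‖fderiv ℝ u x‖^2 + (1 + ε⁻¹) * (Cb * (a1 * Set.indicator {x | R ≤ ‖x‖} (fun x => u x ^ (2 * ((k:ℝ)+2)/k)) x
        + Set.indicator (Metric.closedBall 0 (2*R)) (fun _ => a2) x)) with hbd
    have hb : ∀ x, ‖fderiv ℝ (fun x => χ R x * u x) x‖^2 ≤ bd x := by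
      intro x
      have e : fderiv ℝ (fun x => χ R x * u x) x = χ R x • fderiv ℝ u x + u x • fderiv ℝ (χ R) x :=
        fderiv_fun_mul ((c1.differentiable (by simp)) x) (hd x)
      rw [e]
      have h1 : ‖χ R x • fderiv ℝ u x + u x • fderiv ℝ (χ R) x‖ ≤ ‖fderiv ℝ u x‖ + u x * ‖fderiv ℝ (χ R) x‖ := by
        refine (norm_add_le _ _).trans ?_
        rw [norm_smul, norm_smul, Real.norm_of_nonneg (c3 x).1, Real.norm_of_nonneg (h0 x)]
        have := mul_le_of_le_one_left (norm_nonneg (fderiv ℝ u x)) (c3 x).2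
        linarith
      have h2 := pow_le_pow_left₀ (norm_nonneg _) h1 2
      have h3 : (‖fderiv ℝ u x‖ + u x * ‖fderiv ℝ (χ R) x‖)^2 ≤ (1 + ε) * ‖fderiv ℝ u x‖^2 + (1 + ε⁻¹) * (u x * ‖fderiv ℝ (χ R) x‖)^2 := by
        have : 0 ≤ ε⁻¹ * (ε * ‖fderiv ℝ u x‖ - u x * ‖fderiv ℝ (χ R) x‖)^2 := by positivity
        have e : ε⁻¹ * (ε * ‖fderiv ℝ u x‖ - u x * ‖fderiv ℝ (χ R) x‖)^2 = ε * ‖fderiv ℝ u x‖^2 - 2 * ‖fderiv ℝ u x‖ * (u x * ‖fderiv ℝ (χ R) x‖) + ε⁻¹ * (u x * ‖fderiv ℝ (χ R) x‖)^2 := by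
          field_simp; ring
        nlinarith
      have h4 : (u x * ‖fderiv ℝ (χ R) x‖)^2 ≤ Cb * (a1 * Set.indicator {x | R ≤ ‖x‖} (fun x => u x ^ (2 * ((k:ℝ)+2)/k)) x
        + Set.indicator (Metric.closedBall 0 (2*R)) (fun _ => a2) x) := by
        rw [mul_pow]
        refine (mul_le_mul_of_nonneg_left (c5 x) (sq_nonneg _)).trans ?_
        rw [show u x ^ 2 * (Cb * Set.indicator ({x | R ≤ ‖x‖} ∩ Metric.closedBall 0 (2 * R)) (fun _ => (R^2)⁻¹) x) =
          Cb * (u x ^ 2 * Set.indicator ({x | R ≤ ‖x‖} ∩ Metric.closedBall 0 (2 * R)) (fun _ => (R^2)⁻¹) x) by ring]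
        refine mul_le_mul_of_nonneg_left ?_ hCb
        by_cases hx : x ∈ {x | R ≤ ‖x‖} ∩ Metric.closedBall 0 (2 * R)
        · rw [Set.indicator_of_mem hx, Set.indicator_of_mem hx.1, Set.indicator_of_mem hx.2]
          exact young_k hk (h0 x) hR hθ
        · rw [Set.indicator_of_notMem hx, mul_zero]
          refine add_nonneg (mul_nonneg ha1p.le (Set.indicator_nonneg (fun y _ => ?_) x)) (Set.indicator_nonneg (fun y _ => ha2p.le) x)
          have := h0 y; positivity
      have h5 := mul_le_mul_of_nonneg_left h4 (show 0 ≤ 1 + ε⁻¹ by positivity)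
      simp only [hbd]
      linarith
    have j1 : Integrable (Set.indicator {x : EuclideanSpace ℝ (Fin (k+2)) | R ≤ ‖x‖} (fun x => u x ^ (2 * ((k:ℝ)+2)/k))) := hL.indicator mA
    have j2 : Integrable (Set.indicator (Metric.closedBall (0:EuclideanSpace ℝ (Fin (k+2))) (2*R)) (fun _ => a2)) :=
      (integrable_indicator_iff mB).mpr (integrableOn_const (measure_closedBall_lt_top.ne))
    have j3 : Integrable fun x => a1 * Set.indicator {x | R ≤ ‖x‖} (fun x => u x ^ (2 * ((k:ℝ)+2)/k)) x
        + Set.indicator (Metric.closedBall 0 (2*R)) (fun _ => a2) x := (j1.const_mul _).add j2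
    have jb : Integrable bd := (hi.const_mul _).add ((j3.const_mul _).const_mul _)
    have hwi : Integrable fun x => ‖fderiv ℝ (fun x => χ R x * u x) x‖^2 :=
      jb.mono' ((measurable_fderiv ℝ _).norm.pow_const 2).aestronglyMeasurable (Filter.Eventually.of_forall fun x => by
        rw [Real.norm_of_nonneg (by positivity)]; exact hb x)
    have fin := ext_cs hp hA hc H hwd hws (fun x => mul_nonneg (c3 x).1 (h0 x)) hwi
    refine fin.trans (ENNReal.ofReal_le_ofReal ?_)
    have hI : ∫ x, bd x = (1 + ε) * G + (1 + ε⁻¹) * (Cb * (a1 * (∫ x in {x | R ≤ ‖x‖}, u x ^ (2 * ((k:ℝ)+2)/k)) + θ ^ (((k:ℝ)+2)/2) * V)) := by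
      simp only [hbd]
      rw [integral_add (hi.const_mul _) ((j3.const_mul _).const_mul _), integral_const_mul, integral_const_mul, integral_const_mul,
        integral_add (j1.const_mul _) j2, integral_const_mul, integral_indicator mA, integral_indicator_const _ mB,
        Measure.addHaar_real_closedBall _ _ (by positivity), finrank_euclideanSpace, Fintype.card_fin, smul_eq_mul, mul_pow, hV, ha2]
      congr 4
      field_simp
    rw [← hI]
    have := integral_mono hwi jb hb
    gcongr
  have step2 : ∀ ε θ : ℝ, 0 < ε → 0 < θ → ∫⁻ x, ENNReal.ofReal (u x ^ p) ∂μ ≤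
      ENNReal.ofReal (A * ((1 + ε) * G + (1 + ε⁻¹) * (Cb * ((θ⁻¹) ^ (((k:ℝ)+2)/k) * 0 + θ ^ (((k:ℝ)+2)/2) * V))) ^ c) := by
    intro ε θ hε hθ
    refine fatou_pow hp (φ := fun j x => χ ((j:ℝ)+1) x * u x) (fun j => ((hχ ((j:ℝ)+1) (by positivity)).1.continuous.mul hd.continuous)) (fun x => ?_) ?_
      (fun j => step1 ε θ ((j:ℝ)+1) hε hθ (by positivity))
    · refine tendsto_const_nhds.congr' ?_
      obtain ⟨N, hN⟩ := exists_nat_gt ‖x‖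
      filter_upwards [Filter.eventually_ge_atTop N] with j hj
      have : (N:ℝ) ≤ j := by exact_mod_cast hj
      rw [(hχ ((j:ℝ)+1) (by positivity)).2.2.2.1 x (by linarith), one_mul]
    · refine ENNReal.tendsto_ofReal (Filter.Tendsto.const_mul _ (Filter.Tendsto.rpow_const ?_ (Or.inr hc)))
      exact (((((tail_zero hL).const_mul _).add_const _).const_mul _).const_mul _).const_add _
  have step3 : ∀ ε : ℝ, 0 < ε → ∫⁻ x, ENNReal.ofReal (u x ^ p) ∂μ ≤ ENNReal.ofReal (A * ((1 + ε) * G) ^ c) := by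
    intro ε hε
    refine ge_of_tendsto (x := nhdsWithin 0 (Set.Ioi 0)) (f := fun θ : ℝ => ENNReal.ofReal (A * ((1 + ε) * G + (1 + ε⁻¹) * (Cb * ((θ⁻¹) ^ (((k:ℝ)+2)/k) * 0 + θ ^ (((k:ℝ)+2)/2) * V))) ^ c)) ?_ ?_
    · refine ENNReal.tendsto_ofReal (Filter.Tendsto.const_mul _ (Filter.Tendsto.rpow_const ?_ (Or.inr hc)))
      have hcont : Continuous fun θ : ℝ => (1 + ε) * G + (1 + ε⁻¹) * (Cb * (θ ^ (((k:ℝ)+2)/2) * V)) := by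
        have : Continuous fun θ : ℝ => θ ^ (((k:ℝ)+2)/2) := Real.continuous_rpow_const (by positivity)
        fun_prop
      have h := (hcont.tendsto 0).mono_left (nhdsWithin_le_nhds (s := Set.Ioi 0))
      rw [Real.zero_rpow (by positivity)] at h
      simpa using h
    · filter_upwards [self_mem_nhdsWithin] with θ hθ
      exact step2 ε θ hε hθ
  refine ge_of_tendsto (x := nhdsWithin 0 (Set.Ioi 0)) (f := fun ε : ℝ => ENNReal.ofReal (A * ((1 + ε) * G) ^ c)) ?_ ?_
  · refine ENNReal.tendsto_ofReal (Filter.Tendsto.const_mul _ (Filter.Tendsto.rpow_const ?_ (Or.inr hc)))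
    have hcont : Continuous fun ε : ℝ => (1 + ε) * G := by fun_prop
    simpa using (hcont.tendsto 0).mono_left (nhdsWithin_le_nhds (s := Set.Ioi 0))
  · filter_upwards [self_mem_nhdsWithin] with ε hε
    exact step3 ε hε

end ISP


namespace ISP
open FourierTransform SchwartzMap LineDeriv
open scoped FourierTransform

lemma four_flip {n : ℕ} {f g : EuclideanSpace ℝ (Fin n) → ℂ} (hf : Integrable f) (hg : Integrable g) :
    ∫ ξ, 𝓕 f ξ * g ξ = ∫ x, f x * 𝓕 g x := by
  have := VectorFourier.integral_bilin_fourierIntegral_eq_flip (ContinuousLinearMap.mul ℂ ℂ) (L := innerₗ (EuclideanSpace ℝ (Fin n)))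
    continuous_fourierChar continuous_inner hf hg
  simpa using! this

lemma dual_norm_sq {n : ℕ} (L : EuclideanSpace ℝ (Fin n) →L[ℝ] ℝ) : ‖L‖^2 = ∑ i, (L (EuclideanSpace.single i 1))^2 := by
  obtain ⟨a, rfl⟩ := (InnerProductSpace.toDual ℝ (EuclideanSpace ℝ (Fin n))).surjective L
  rw [LinearIsometryEquiv.norm_map, EuclideanSpace.norm_sq_eq]
  refine Finset.sum_congr rfl fun i _ => ?_
  simp [EuclideanSpace.inner_single_right]

lemma planch {n : ℕ} {φ : EuclideanSpace ℝ (Fin n) → ℝ} (hφ : ContDiff ℝ ((⊤:ℕ∞):WithTop ℕ∞) φ) (hcs : HasCompactSupport φ) :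
    ∃ F : 𝓢(EuclideanSpace ℝ (Fin n), ℂ), (∀ x, 𝓕 (F : EuclideanSpace ℝ (Fin n) → ℂ) x = φ x) ∧
      ∫⁻ ξ, ENNReal.ofReal ((2 * π * ‖ξ‖)^2 * ‖F ξ‖^2) = ENNReal.ofReal (∫ x, ‖fderiv ℝ φ x‖^2) := by
  have hsm : ContDiff ℝ ((⊤:ℕ∞):WithTop ℕ∞) (fun x => (φ x : ℂ)) := Complex.ofRealCLM.contDiff.comp hφ
  have hc2 : HasCompactSupport (fun x => (φ x : ℂ)) := hcs.comp_left (g := fun r : ℝ => (r:ℂ)) (by simp)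
  set Φ : 𝓢(EuclideanSpace ℝ (Fin n), ℂ) := hc2.toSchwartzMap hsm with hΦ
  have hΦa : ∀ x, Φ x = φ x := fun x => rfl
  refine ⟨𝓕⁻ Φ, fun x => ?_, ?_⟩
  · rw [← SchwartzMap.fourier_coe, FourierTransform.fourier_fourierInv_eq, hΦa]
  have key : ∀ i : Fin n, ∫ ξ, ‖𝓕⁻ (∂_{(EuclideanSpace.single i (1:ℝ) : EuclideanSpace ℝ (Fin n))} Φ) ξ‖^2 = ∫ x, (fderiv ℝ φ x (EuclideanSpace.single i 1))^2 := by
    intro i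
    rw [← SchwartzMap.integral_norm_sq_fourier, FourierTransform.fourier_fourierInv_eq]
    congr 1; ext x
    rw [SchwartzMap.lineDerivOp_apply_eq_fderiv]
    have : HasFDerivAt (Φ : EuclideanSpace ℝ (Fin n) → ℂ) (Complex.ofRealCLM.comp (fderiv ℝ φ x)) x :=
      Complex.ofRealCLM.hasFDerivAt.comp x (hφ.differentiable (by simp) x).hasFDerivAt
    rw [this.fderiv]
    simp
  have e1 : ∀ ξ, (2 * π * ‖ξ‖)^2 * ‖(𝓕⁻ Φ) ξ‖^2 = ∑ i : Fin n, ‖𝓕⁻ (∂_{(EuclideanSpace.single i (1:ℝ) : EuclideanSpace ℝ (Fin n))} Φ) ξ‖^2 := by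
    intro ξ
    have : ∀ i : Fin n, ‖𝓕⁻ (∂_{(EuclideanSpace.single i (1:ℝ) : EuclideanSpace ℝ (Fin n))} Φ) ξ‖^2 = (2*π)^2 * (ξ i)^2 * ‖(𝓕⁻ Φ) ξ‖^2 := by
      intro i
      rw [SchwartzMap.fourierInv_lineDerivOp_eq]
      have ht : (inner ℝ · (EuclideanSpace.single i (1:ℝ) : EuclideanSpace ℝ (Fin n))).HasTemperateGrowth := by fun_prop
      simp [SchwartzMap.smulLeftCLM_apply_apply ht, mul_pow, abs_of_pos Real.pi_pos]
      rw [EuclideanSpace.inner_single_right]; simp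
      ring
    simp_rw [this]
    rw [← Finset.sum_mul, ← Finset.mul_sum, mul_pow, EuclideanSpace.norm_sq_eq]
    simp
  have hIntg : ∀ i : Fin n, Integrable fun ξ => ‖𝓕⁻ (∂_{(EuclideanSpace.single i (1:ℝ) : EuclideanSpace ℝ (Fin n))} Φ) ξ‖^2 := by
    intro i
    have := (𝓕⁻ (∂_{(EuclideanSpace.single i (1:ℝ) : EuclideanSpace ℝ (Fin n))} Φ)).memLp 2 volume
    exact this.integrable_norm_pow (by norm_num)
  have hcd : Continuous (fderiv ℝ φ) := hφ.continuous_fderiv (by simp)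
  have hIntg2 : ∀ i : Fin n, Integrable fun x => (fderiv ℝ φ x (EuclideanSpace.single i 1))^2 := by
    intro i
    refine Continuous.integrable_of_hasCompactSupport (by fun_prop) ?_
    exact (hcs.fderiv (𝕜 := ℝ)).comp_left (g := fun L : EuclideanSpace ℝ (Fin n) →L[ℝ] ℝ => (L (EuclideanSpace.single i 1))^2) (by simp)
  rw [← ofReal_integral_eq_lintegral_ofReal]
  · simp_rw [e1, dual_norm_sq]
    rw [integral_finsetSum _ (fun i _ => hIntg i), integral_finsetSum _ (fun i _ => hIntg2 i)]
    simp_rw [key]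
  · simp_rw [e1]; exact integrable_finsetSum _ (fun i _ => hIntg i)
  · exact Filter.Eventually.of_forall fun ξ => by positivity

lemma gauss_energy {n : ℕ} {w : EuclideanSpace ℝ (Fin n) → ℝ} (hw : Integrable w) {b : ℝ} (hb : 0 < b) :
    ((∫ ξ, ‖𝓕 (fun x => (w x : ℂ)) ξ‖^2 * Real.exp (-b * ‖ξ‖^2) : ℝ) : ℂ) =
      ((∫ x, w x * ∫ y, (π/b)^((n:ℝ)/2) * Real.exp (-π^2 * ‖y - x‖^2 / b) * w y : ℝ) : ℂ) := by
  set W : EuclideanSpace ℝ (Fin n) → ℂ := fun x => (w x : ℂ) with hW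
  have hWi : Integrable W := hw.ofReal
  have hWn : Integrable (fun x => W (-x)) := hWi.comp_neg
  have hconj : ∀ ξ, 𝓕 (fun x => W (-x)) ξ = (starRingEnd ℂ) (𝓕 W ξ) := by
    intro ξ
    rw [Real.fourier_eq', Real.fourier_eq', ← integral_conj, ← integral_neg_eq_self]
    congr 1; ext x
    simp [hW, ← Complex.exp_conj]
    left; congr 4; exact (Complex.conj_ofNat 2).symm
  set g : EuclideanSpace ℝ (Fin n) → ℂ := fun ξ => Complex.exp (-(b:ℂ) * ‖ξ‖^2) with hg
  have hbre : 0 < (b:ℂ).re := by simpa using hb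
  have hgi : Integrable g := by
    have := GaussianFourier.integrable_cexp_neg_mul_sq_norm_add (V := EuclideanSpace ℝ (Fin n)) hbre 0 0
    simpa [hg] using this
  have hcont : ∀ {f : EuclideanSpace ℝ (Fin n) → ℂ}, Integrable f → Continuous (𝓕 f) := fun hf =>
    VectorFourier.fourierIntegral_continuous continuous_fourierChar continuous_inner hf
  have hbd : ∀ (f : EuclideanSpace ℝ (Fin n) → ℂ) ξ, ‖𝓕 f ξ‖ ≤ ∫ x, ‖f x‖ := fun f ξ =>
    VectorFourier.norm_fourierIntegral_le_integral_norm _ _ _ _ _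
  have hgW : Integrable (fun ξ => g ξ * 𝓕 (fun x => W (-x)) ξ) :=
    hgi.mul_bdd (c := ∫ x, ‖W (-x)‖) (hcont hWn).aestronglyMeasurable (Filter.Eventually.of_forall fun ξ => hbd _ ξ)
  have h1 := four_flip hWi hgW
  have hl : ∫ ξ, 𝓕 W ξ * (g ξ * 𝓕 (fun x => W (-x)) ξ) = ((∫ ξ, ‖𝓕 W ξ‖^2 * Real.exp (-b * ‖ξ‖^2) : ℝ) : ℂ) := by
    rw [← integral_complex_ofReal]
    congr 1; ext ξ
    rw [hconj, mul_left_comm, Complex.mul_conj, Complex.normSq_eq_norm_sq, hg]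
    push_cast; ring
  rw [← hl, h1, ← integral_complex_ofReal]
  congr 1; ext x
  push_cast
  congr 1
  rw [Real.fourier_eq']
  have hhi : Integrable (fun ξ : EuclideanSpace ℝ (Fin n) => Complex.exp (-(b:ℂ) * ‖ξ‖^2 + 2 * π * Complex.I * (inner ℝ (-x) ξ : ℝ))) := by
    have := GaussianFourier.integrable_cexp_neg_mul_sq_norm_add (V := EuclideanSpace ℝ (Fin n)) hbre (2 * π * Complex.I) (-x)
    simpa using this
  have h2 := four_flip hWn hhi
  calc _ = ∫ ξ, 𝓕 (fun x => W (-x)) ξ * Complex.exp (-(b:ℂ) * ‖ξ‖^2 + 2 * π * Complex.I * (inner ℝ (-x) ξ : ℝ)) := by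
        congr 1; ext ξ
        rw [hg, smul_eq_mul, Complex.exp_add, inner_neg_left, real_inner_comm]
        push_cast
        rw [show (-2 * (π:ℂ) * (inner ℝ x ξ : ℝ)) * Complex.I = 2 * π * Complex.I * -(inner ℝ x ξ : ℝ) by ring]
        ring
    _ = _ := h2
    _ = ∫ y, W (-y) * (((π/b)^((n:ℝ)/2) * Real.exp (-π^2 * ‖-y - x‖^2 / b) : ℝ) : ℂ) := by
        congr 1; ext y
        rw [fourier_gaussian_innerProductSpace' hbre (-x) y]
        congr 1
        push_cast
        rw [show -y - x = -x - y by abel]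
        congr 1
        rw [Complex.ofReal_cpow (by positivity)]
        simp
    _ = ∫ y, W y * (((π/b)^((n:ℝ)/2) * Real.exp (-π^2 * ‖y - x‖^2 / b) : ℝ) : ℂ) :=
        integral_neg_eq_self (fun y => W y * (((π/b)^((n:ℝ)/2) * Real.exp (-π^2 * ‖y - x‖^2 / b) : ℝ) : ℂ)) volume
    _ = _ := by
        rw [← integral_complex_ofReal]
        congr 1; ext y
        rw [hW]; push_cast; ring

end ISP


namespace ISP
open FourierTransform SchwartzMap
open scoped FourierTransform ENNReal

lemma lint_inv (f : ℝ → ℝ≥0∞) : ∫⁻ t in Set.Ioi (0:ℝ), f t = ∫⁻ s in Set.Ioi (0:ℝ), ENNReal.ofReal (s^2)⁻¹ * f s⁻¹ := by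
  have him : (fun s : ℝ => s⁻¹) '' Set.Ioi (0:ℝ) = Set.Ioi 0 := by
    ext x; constructor
    · rintro ⟨y, hy, rfl⟩; exact Set.mem_Ioi.mpr (inv_pos.mpr (Set.mem_Ioi.mp hy))
    · intro hx; exact ⟨x⁻¹, Set.mem_Ioi.mpr (inv_pos.mpr (Set.mem_Ioi.mp hx)), inv_inv x⟩
  have h := lintegral_image_eq_lintegral_abs_deriv_mul (s := Set.Ioi (0:ℝ)) (f := fun s => s⁻¹) (f' := fun s => -(s^2)⁻¹) measurableSet_Ioi
    (fun x hx => (hasDerivAt_inv (ne_of_gt hx)).hasDerivWithinAt) (inv_injective.injOn) f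
  rw [him] at h
  rw [h]
  refine setLIntegral_congr_fun measurableSet_Ioi fun s hs => ?_
  simp only [abs_neg]
  rw [abs_of_nonneg (by positivity)]

lemma heat_green {k : ℕ} (hk : 1 ≤ k) {z : EuclideanSpace ℝ (Fin (k+2))} (hz : z ≠ 0) :
    ENNReal.ofReal (1/(4*π^2)) * ∫⁻ b in Set.Ioi (0:ℝ), ENNReal.ofReal ((π/b)^(((k+2:ℕ):ℝ)/2) * Real.exp (-π^2 * ‖z‖^2 / b)) = ENNReal.ofReal (greenKernel (k+2) z) := by
  have hk0 : (0:ℝ) < k := by exact_mod_cast hk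
  have hz0 : 0 < ‖z‖ := norm_pos_iff.mpr hz
  rw [lint_inv]
  have e : ∀ s ∈ Set.Ioi (0:ℝ), ENNReal.ofReal (s^2)⁻¹ * ENNReal.ofReal ((π/s⁻¹)^(((k+2:ℕ):ℝ)/2) * Real.exp (-π^2 * ‖z‖^2 / s⁻¹))
      = ENNReal.ofReal (π^(((k:ℝ)+2)/2)) * ENNReal.ofReal (s^((k:ℝ)/2 - 1) * Real.exp (-(π^2*‖z‖^2 * s))) := by
    intro s hs
    have hs : 0 < s := hs
    rw [← ENNReal.ofReal_mul (by positivity), ← ENNReal.ofReal_mul (by positivity)]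
    congr 1
    rw [div_inv_eq_mul, div_inv_eq_mul, Real.mul_rpow pi_pos.le hs.le]
    push_cast
    have : (s^2)⁻¹ * s^(((k:ℝ)+2)/2) = s^((k:ℝ)/2 - 1) := by
      rw [← Real.rpow_natCast, ← Real.rpow_neg hs.le, ← Real.rpow_add hs]
      congr 1; push_cast; ring
    rw [← this, show -π^2 * ‖z‖^2 * s = -(π^2*‖z‖^2*s) by ring]
    ring
  rw [setLIntegral_congr_fun measurableSet_Ioi e, lintegral_const_mul' _ _ ENNReal.ofReal_ne_top, lint_gamma (by positivity) (by positivity),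
    ← ENNReal.ofReal_mul (by positivity), ← ENNReal.ofReal_mul (by positivity)]
  congr 1
  unfold greenKernel sphereArea
  push_cast
  have hG : Real.Gamma (((k:ℝ)+2)/2) = k/2 * Real.Gamma (k/2) := by
    rw [show ((k:ℝ)+2)/2 = k/2 + 1 by ring, Real.Gamma_add_one (by positivity)]
  have hGp : 0 < Real.Gamma ((k:ℝ)/2) := Real.Gamma_pos_of_pos (by positivity)
  rw [hG, show (2:ℝ) - (k+2) = -k by ring, Real.rpow_neg hz0.le, one_div (π^2*‖z‖^2), Real.inv_rpow (by positivity), show π^2*‖z‖^2 = (π*‖z‖)^2 by ring,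
    ← Real.rpow_natCast (π*‖z‖), ← Real.rpow_mul (by positivity), show ((2:ℕ):ℝ) * ((k:ℝ)/2) = k by push_cast; ring, Real.mul_rpow pi_pos.le hz0.le]
  have hp : (π:ℝ)^(((k:ℝ)+2)/2) * π^(((k:ℝ)+2)/2) = π^2 * π^(k:ℝ) := by
    rw [← Real.rpow_natCast, ← Real.rpow_add pi_pos, ← Real.rpow_add pi_pos]; congr 1; push_cast; ring
  have : (0:ℝ) < π^(((k:ℝ)+2)/2) := by positivity
  have : (0:ℝ) < π^(k:ℝ) := by positivity
  have : (0:ℝ) < ‖z‖^(k:ℝ) := by positivity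
  rw [add_sub_cancel_right]
  field_simp
  nlinarith [hp]

/-- energy -/
noncomputable def energy (n : ℕ) (w : EuclideanSpace ℝ (Fin n) → ℝ) : ℝ≥0∞ :=
  ∫⁻ x, ∫⁻ y, ENNReal.ofReal (w x) * (ENNReal.ofReal (greenKernel n (y - x)) * ENNReal.ofReal (w y))

lemma gauss_le {n : ℕ} {w : EuclideanSpace ℝ (Fin n) → ℝ} (hw : Integrable w) (h0 : ∀ x, 0 ≤ w x) {b : ℝ} (hb : 0 < b) :
    ∫⁻ ξ, ENNReal.ofReal (‖𝓕 (fun x => (w x : ℂ)) ξ‖^2) * ENNReal.ofReal (Real.exp (-(‖ξ‖^2*b))) ≤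
      ∫⁻ x, ∫⁻ y, ENNReal.ofReal (w x) * (ENNReal.ofReal ((π/b)^((n:ℝ)/2) * Real.exp (-π^2 * ‖y - x‖^2 / b)) * ENNReal.ofReal (w y)) := by
  have hWi : Integrable (fun x => (w x : ℂ)) := hw.ofReal
  have hcont : Continuous (𝓕 (fun x => (w x : ℂ))) :=
    VectorFourier.fourierIntegral_continuous continuous_fourierChar continuous_inner hWi
  have hbd : ∀ ξ, ‖𝓕 (fun x => (w x : ℂ)) ξ‖ ≤ ∫ x, ‖(w x : ℂ)‖ := fun ξ =>
    VectorFourier.norm_fourierIntegral_le_integral_norm _ _ _ _ _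
  have hgi : Integrable (fun ξ : EuclideanSpace ℝ (Fin n) => Real.exp (-b * ‖ξ‖^2)) := by
    by_contra hn
    have h := GaussianFourier.integral_rexp_neg_mul_sq_norm (V := EuclideanSpace ℝ (Fin n)) hb
    rw [integral_undef hn] at h
    have : 0 < (π / b) ^ ((Module.finrank ℝ (EuclideanSpace ℝ (Fin n)):ℝ)/2) := by positivity
    linarith
  have hi : Integrable (fun ξ => ‖𝓕 (fun x => (w x : ℂ)) ξ‖^2 * Real.exp (-b * ‖ξ‖^2)) := by
    refine hgi.bdd_mul (c := (∫ x, ‖(w x : ℂ)‖)^2) (by fun_prop) (Filter.Eventually.of_forall fun ξ => ?_)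
    rw [norm_pow, norm_norm]
    exact pow_le_pow_left₀ (norm_nonneg _) (hbd ξ) 2
  calc _ = ENNReal.ofReal (∫ ξ, ‖𝓕 (fun x => (w x : ℂ)) ξ‖^2 * Real.exp (-b * ‖ξ‖^2)) := by
        rw [ofReal_integral_eq_lintegral_ofReal hi (Filter.Eventually.of_forall fun ξ => by positivity)]
        refine lintegral_congr fun ξ => ?_
        rw [← ENNReal.ofReal_mul (by positivity)]
        congr 4; ring
    _ = ENNReal.ofReal (∫ x, w x * ∫ y, (π/b)^((n:ℝ)/2) * Real.exp (-π^2 * ‖y - x‖^2 / b) * w y) := by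
        rw [Complex.ofReal_injective (gauss_energy hw hb)]
    _ ≤ ‖∫ x, w x * ∫ y, (π/b)^((n:ℝ)/2) * Real.exp (-π^2 * ‖y - x‖^2 / b) * w y‖ₑ := by
        rw [← ofReal_norm]; exact ENNReal.ofReal_le_ofReal (le_abs_self _)
    _ ≤ ∫⁻ x, ‖w x * ∫ y, (π/b)^((n:ℝ)/2) * Real.exp (-π^2 * ‖y - x‖^2 / b) * w y‖ₑ := enorm_integral_le_lintegral_enorm _
    _ ≤ _ := by
        refine lintegral_mono fun x => ?_
        rw [enorm_mul, lintegral_const_mul' _ _ ENNReal.ofReal_ne_top, Real.enorm_of_nonneg (h0 x)]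
        gcongr
        refine (enorm_integral_le_lintegral_enorm _).trans (le_of_eq (lintegral_congr fun y => ?_))
        rw [enorm_mul, Real.enorm_of_nonneg (h0 y), Real.enorm_of_nonneg (by positivity)]

lemma four_energy {k : ℕ} (hk : 1 ≤ k) {w : EuclideanSpace ℝ (Fin (k+2)) → ℝ} (hm : Measurable w) (hw : Integrable w) (h0 : ∀ x, 0 ≤ w x) :
    ∫⁻ ξ, ENNReal.ofReal (‖𝓕 (fun x => (w x : ℂ)) ξ‖^2 * ((2*π*‖ξ‖)⁻¹)^2) ≤ energy (k+2) w := by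
  have hWi : Integrable (fun x => (w x : ℂ)) := hw.ofReal
  have hcont : Continuous (𝓕 (fun x => (w x : ℂ))) :=
    VectorFourier.fourierIntegral_continuous continuous_fourierChar continuous_inner hWi
  have hne : ∀ (a : EuclideanSpace ℝ (Fin (k+2))), ∀ᵐ x, x ≠ a := fun a => by
    simp [ae_iff, measure_singleton]
  calc _ = ∫⁻ ξ, ENNReal.ofReal (1/(4*π^2)) * ∫⁻ b in Set.Ioi (0:ℝ), ENNReal.ofReal (‖𝓕 (fun x => (w x : ℂ)) ξ‖^2) * ENNReal.ofReal (Real.exp (-(‖ξ‖^2*b))) := by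
        refine lintegral_congr_ae ?_
        filter_upwards [hne 0] with ξ hξ
        have hξ0 : 0 < ‖ξ‖ := norm_pos_iff.mpr hξ
        have := lint_gamma one_pos (show 0 < ‖ξ‖^2 by positivity)
        simp only [sub_self, Real.rpow_zero, one_mul, Real.Gamma_one, mul_one, Real.rpow_one] at this
        rw [lintegral_const_mul' _ _ ENNReal.ofReal_ne_top, this, ← ENNReal.ofReal_mul (by positivity), ← ENNReal.ofReal_mul (by positivity)]
        congr 1
        field_simp; ring
    _ = ENNReal.ofReal (1/(4*π^2)) * ∫⁻ b in Set.Ioi (0:ℝ), ∫⁻ ξ, ENNReal.ofReal (‖𝓕 (fun x => (w x : ℂ)) ξ‖^2) * ENNReal.ofReal (Real.exp (-(‖ξ‖^2*b))) := by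
        rw [lintegral_const_mul' _ _ ENNReal.ofReal_ne_top, lintegral_lintegral_swap]
        refine Measurable.aemeasurable ?_
        unfold Function.uncurry
        have := hcont.measurable
        fun_prop
    _ ≤ ENNReal.ofReal (1/(4*π^2)) * ∫⁻ b in Set.Ioi (0:ℝ), ∫⁻ x, ∫⁻ y, ENNReal.ofReal (w x) * (ENNReal.ofReal ((π/b)^(((k+2:ℕ):ℝ)/2) * Real.exp (-π^2 * ‖y - x‖^2 / b)) * ENNReal.ofReal (w y)) := by
        refine mul_le_mul' le_rfl ?_
        exact setLIntegral_mono' measurableSet_Ioi fun b hb => gauss_le hw h0 (Set.mem_Ioi.mp hb)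
    _ = ENNReal.ofReal (1/(4*π^2)) * ∫⁻ x, ∫⁻ y, ∫⁻ b in Set.Ioi (0:ℝ), ENNReal.ofReal (w x) * (ENNReal.ofReal ((π/b)^(((k+2:ℕ):ℝ)/2) * Real.exp (-π^2 * ‖y - x‖^2 / b)) * ENNReal.ofReal (w y)) := by
        congr 1
        have hM : Measurable (fun q : (ℝ × EuclideanSpace ℝ (Fin (k+2))) × EuclideanSpace ℝ (Fin (k+2)) => ENNReal.ofReal (w q.1.2) * (ENNReal.ofReal ((π/q.1.1)^(((k+2:ℕ):ℝ)/2) * Real.exp (-π^2 * ‖q.2 - q.1.2‖^2 / q.1.1)) * ENNReal.ofReal (w q.2))) := by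
          fun_prop
        rw [lintegral_lintegral_swap]
        · refine lintegral_congr fun x => ?_
          rw [lintegral_lintegral_swap]
          refine Measurable.aemeasurable ?_
          exact hM.comp (f := fun p : ℝ × EuclideanSpace ℝ (Fin (k+2)) => ((p.1, x), p.2)) (by fun_prop)
        · exact (hM.lintegral_prod_right').aemeasurable
    _ = _ := by
        unfold energy
        rw [← lintegral_const_mul' _ _ ENNReal.ofReal_ne_top]
        refine lintegral_congr fun x => ?_
        rw [← lintegral_const_mul' _ _ ENNReal.ofReal_ne_top]
        refine lintegral_congr_ae ?_
        filter_upwards [hne x] with y hy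
        rw [lintegral_const_mul' _ _ ENNReal.ofReal_ne_top, lintegral_mul_const' _ _ ENNReal.ofReal_ne_top, mul_left_comm, ← mul_assoc (ENNReal.ofReal (1/(4*π^2))),
          heat_green hk (sub_ne_zero.mpr hy)]

lemma dual_L1 {k : ℕ} (hk : 1 ≤ k) {w : EuclideanSpace ℝ (Fin (k+2)) → ℝ} (hm : Measurable w) (hw : Integrable w) (h0 : ∀ x, 0 ≤ w x)
    {φ : EuclideanSpace ℝ (Fin (k+2)) → ℝ} (hφ : ContDiff ℝ ((⊤:ℕ∞):WithTop ℕ∞) φ) (hcs : HasCompactSupport φ) (hφ0 : ∀ x, 0 ≤ φ x) :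
    ∫⁻ x, ENNReal.ofReal (φ x * w x) ≤ ENNReal.ofReal (∫ x, ‖fderiv ℝ φ x‖^2) ^ (1/2 : ℝ) * energy (k+2) w ^ (1/2 : ℝ) := by
  obtain ⟨F, hF, hP⟩ := planch hφ hcs
  have hWi : Integrable (fun x => (w x : ℂ)) := hw.ofReal
  have hcont : Continuous (𝓕 (fun x => (w x : ℂ))) :=
    VectorFourier.fourierIntegral_continuous continuous_fourierChar continuous_inner hWi
  have hne : ∀ (a : EuclideanSpace ℝ (Fin (k+2))), ∀ᵐ x, x ≠ a := fun a => by
    simp [ae_iff, measure_singleton]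
  obtain ⟨M, hM⟩ := hcs.exists_bound_of_continuous hφ.continuous
  have hi : Integrable fun x => φ x * w x := hw.bdd_mul hφ.continuous.aestronglyMeasurable (Filter.Eventually.of_forall hM)
  have e1 : ((∫ x, φ x * w x : ℝ) : ℂ) = ∫ ξ, F ξ * 𝓕 (fun x => (w x : ℂ)) ξ := by
    rw [← four_flip F.integrable hWi, ← integral_complex_ofReal]
    congr 1; ext x
    rw [hF]; push_cast; rfl
  have e2 : ∫⁻ x, ENNReal.ofReal (φ x * w x) = ‖∫ ξ, F ξ * 𝓕 (fun x => (w x : ℂ)) ξ‖ₑ := by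
    rw [← e1, ← ofReal_integral_eq_lintegral_ofReal hi (Filter.Eventually.of_forall fun x => mul_nonneg (hφ0 x) (h0 x)), ← ofReal_norm,
      Complex.norm_real, Real.norm_of_nonneg (integral_nonneg fun x => mul_nonneg (hφ0 x) (h0 x))]
  rw [e2]
  calc _ ≤ ∫⁻ ξ, ‖F ξ * 𝓕 (fun x => (w x : ℂ)) ξ‖ₑ := enorm_integral_le_lintegral_enorm _
    _ = ∫⁻ ξ, ((fun ξ => ENNReal.ofReal (2*π*‖ξ‖ * ‖F ξ‖)) * (fun ξ => ENNReal.ofReal (‖𝓕 (fun x => (w x : ℂ)) ξ‖ * (2*π*‖ξ‖)⁻¹))) ξ := by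
        refine lintegral_congr_ae ?_
        filter_upwards [hne 0] with ξ hξ
        have hξ0 : 0 < ‖ξ‖ := norm_pos_iff.mpr hξ
        simp only [Pi.mul_apply]
        rw [← ENNReal.ofReal_mul (by positivity), ← ofReal_norm, norm_mul]
        congr 1
        field_simp
    _ ≤ _ := by
        have hFc := F.continuous
        refine (ENNReal.lintegral_mul_le_Lp_mul_Lq volume Real.HolderConjugate.two_two ?_ ?_).trans ?_
        · exact Measurable.aemeasurable (by fun_prop)
        · have := hcont.measurable
          exact Measurable.aemeasurable (by fun_prop)
        · have s1 : ∀ a : ℝ, 0 ≤ a → ENNReal.ofReal a ^ (2:ℝ) = ENNReal.ofReal (a^2) := fun a ha => by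
            rw [ENNReal.ofReal_rpow_of_nonneg ha (by norm_num)]; norm_num
          gcongr ?_ * ?_
          · rw [← hP]
            refine le_of_eq ?_
            congr 1
            refine lintegral_congr fun ξ => ?_
            rw [s1 _ (by positivity), mul_pow]
          · refine ENNReal.rpow_le_rpow ?_ (by norm_num)
            refine le_trans (le_of_eq ?_) (four_energy hk hm hw h0)
            refine lintegral_congr fun ξ => ?_
            rw [s1 _ (by positivity), mul_pow]

lemma dual_cont {k : ℕ} (hk : 1 ≤ k) {v : EuclideanSpace ℝ (Fin (k+2)) → ℝ} (hv : Continuous v) (h0 : ∀ x, 0 ≤ v x)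
    {φ : EuclideanSpace ℝ (Fin (k+2)) → ℝ} (hφ : ContDiff ℝ ((⊤:ℕ∞):WithTop ℕ∞) φ) (hcs : HasCompactSupport φ) (hφ0 : ∀ x, 0 ≤ φ x) :
    ∫⁻ x, ENNReal.ofReal (φ x * v x) ≤ ENNReal.ofReal (∫ x, ‖fderiv ℝ φ x‖^2) ^ (1/2 : ℝ) * energy (k+2) v ^ (1/2 : ℝ) := by
  set w := (tsupport φ).indicator v with hw
  have hK : IsCompact (tsupport φ) := hcs
  have hKm : MeasurableSet (tsupport φ) := (isClosed_tsupport φ).measurableSet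
  have hwm : Measurable w := hv.measurable.indicator hKm
  have hw0 : ∀ x, 0 ≤ w x := fun x => Set.indicator_nonneg (fun y _ => h0 y) x
  have hwi : Integrable w := (integrable_indicator_iff hKm).mpr (hv.continuousOn.integrableOn_compact hK)
  have hle : ∀ x, w x ≤ v x := fun x => Set.indicator_le_self' (fun y _ => h0 y) x
  have := dual_L1 hk hwm hwi hw0 hφ hcs hφ0
  refine le_trans (le_of_eq (lintegral_congr fun x => ?_)) (this.trans ?_)
  · by_cases hx : x ∈ tsupport φ
    · rw [hw, Set.indicator_of_mem hx]
    · rw [image_eq_zero_of_notMem_tsupport hx]; simp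
  · refine mul_le_mul' le_rfl ?_
    refine ENNReal.rpow_le_rpow ?_ (by norm_num)
    unfold energy
    refine lintegral_mono fun x => lintegral_mono fun y => ?_
    gcongr
    · exact hle x
    · exact hle y

end ISP


namespace ISP
open scoped ENNReal

/-- heat kernel -/
noncomputable def hk (n : ℕ) (b : ℝ) (z : EuclideanSpace ℝ (Fin n)) : ℝ := (π/b)^((n:ℝ)/2) * Real.exp (-π^2 * ‖z‖^2 / b)

lemma hk_nonneg {n : ℕ} {b : ℝ} (hb : 0 < b) (z : EuclideanSpace ℝ (Fin n)) : 0 ≤ hk n b z := by unfold hk; positivity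

lemma hk_pow {n : ℕ} {b s : ℝ} (hb : 0 < b) (hs : 0 < s) (x : EuclideanSpace ℝ (Fin n)) :
    ∫⁻ y, ENNReal.ofReal (hk n b (y - x)) ^ s = ENNReal.ofReal ((π/b)^((n:ℝ)/2*s) * (b/(π*s))^((n:ℝ)/2)) := by
  rw [lintegral_sub_right_eq_self (fun y => ENNReal.ofReal (hk n b y) ^ s) x]
  have e : ∀ y : EuclideanSpace ℝ (Fin n), ENNReal.ofReal (hk n b y) ^ s = ENNReal.ofReal ((π/b)^((n:ℝ)/2*s)) * ENNReal.ofReal (Real.exp (-(π^2*s/b) * ‖y‖^2)) := by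
    intro y
    rw [ENNReal.ofReal_rpow_of_nonneg (hk_nonneg hb y) hs.le, ← ENNReal.ofReal_mul (by positivity)]
    congr 1
    unfold hk
    rw [Real.mul_rpow (by positivity) (by positivity), ← Real.rpow_mul (by positivity), ← Real.exp_mul]
    congr 2
    ring
  simp_rw [e]
  rw [lintegral_const_mul' _ _ ENNReal.ofReal_ne_top, lint_gauss (by positivity), ← ENNReal.ofReal_mul (by positivity)]
  congr 3
  field_simp

lemma hk_one {n : ℕ} {b : ℝ} (hb : 0 < b) (x : EuclideanSpace ℝ (Fin n)) :
    ∫⁻ y, ENNReal.ofReal (hk n b (y - x)) = 1 := by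
  have := hk_pow hb one_pos x
  simp only [ENNReal.rpow_one, mul_one] at this
  rw [this, ← Real.mul_rpow (by positivity) (by positivity)]
  have : π / b * (b/π) = 1 := by field_simp
  rw [this]; simp

lemma hk_s {k : ℕ} (hk1 : 1 ≤ k) : ∃ M : ℝ, 0 ≤ M ∧ ∀ b : ℝ, 0 < b → ∀ x : EuclideanSpace ℝ (Fin (k+2)),
    (∫⁻ y, ENNReal.ofReal (hk (k+2) b (y - x)) ^ (2*((k:ℝ)+2)/k)) ^ (1/(2*((k:ℝ)+2)/k)) = ENNReal.ofReal (M * b^(-(k:ℝ)/4 - 1)) := by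
  have hk0 : (0:ℝ) < k := by exact_mod_cast hk1
  set s := 2*((k:ℝ)+2)/k with hs
  have hs0 : 0 < s := by positivity
  refine ⟨π ^ (((k:ℝ)+2)/2) * (1/(π*s))^((k:ℝ)/4), by positivity, fun b hb x => ?_⟩
  rw [hk_pow hb hs0, ENNReal.ofReal_rpow_of_nonneg (by positivity) (by positivity)]
  congr 1
  rw [Real.mul_rpow (by positivity) (by positivity), ← Real.rpow_mul (by positivity), ← Real.rpow_mul (by positivity)]
  push_cast
  rw [show ((k:ℝ)+2)/2*s*(1/s) = ((k:ℝ)+2)/2 by field_simp, show ((k:ℝ)+2)/2*(1/s) = (k:ℝ)/4 by rw [hs]; field_simp; norm_num,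
    show b/(π*s) = 1/(π*s) * b by ring, Real.mul_rpow (by positivity) hb.le, Real.div_rpow pi_pos.le hb.le,
    show (-(k:ℝ)/4 - 1) = k/4 - (k+2)/2 by ring, Real.rpow_sub hb]
  ring

lemma inner_bd {k : ℕ} (hk1 : 1 ≤ k) {v : EuclideanSpace ℝ (Fin (k+2)) → ℝ} (hv : Measurable v) (h0 : ∀ x, 0 ≤ v x)
    (hL : Integrable fun x => v x ^ (2*((k:ℝ)+2)/(k+4))) : ∃ D : ℝ, 0 ≤ D ∧ ∀ x, 0 < v x →
      ∫⁻ y, ENNReal.ofReal (greenKernel (k+2) (y - x)) * ENNReal.ofReal (if v y ≤ v x then v y else 0) ≤ ENNReal.ofReal (D * v x ^ ((k:ℝ)/(k+4))) := by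
  have hk0 : (0:ℝ) < k := by exact_mod_cast hk1
  obtain ⟨M, hM0, hM⟩ := hk_s hk1
  set s := 2*((k:ℝ)+2)/k with hs
  set p := 2*((k:ℝ)+2)/(k+4) with hp
  have hp0 : 0 < p := by positivity
  set N := (∫ x, v x ^ p) ^ (1/p) with hN
  have hN0 : 0 ≤ N := Real.rpow_nonneg (integral_nonneg fun x => Real.rpow_nonneg (h0 x) _) _
  have hNe : (∫⁻ y, ENNReal.ofReal (v y) ^ p) ^ (1/p) = ENNReal.ofReal N := by
    rw [hN, ← ENNReal.ofReal_rpow_of_nonneg (integral_nonneg fun x => Real.rpow_nonneg (h0 x) _) (by positivity),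
      ofReal_integral_eq_lintegral_ofReal hL (Filter.Eventually.of_forall fun x => Real.rpow_nonneg (h0 x) _)]
    congr 1
    exact lintegral_congr fun y => ENNReal.ofReal_rpow_of_nonneg (h0 y) hp0.le
  have hconj : s.HolderConjugate p := by
    rw [Real.holderConjugate_iff]
    constructor
    · rw [hs, lt_div_iff₀ hk0]; linarith
    · rw [hs, hp]; field_simp; ring
  refine ⟨1/(4*π^2) * (1 + M * N * (4/k)), by positivity, fun x hx => ?_⟩
  set t := v x with ht
  set v' : EuclideanSpace ℝ (Fin (k+2)) → ℝ := fun y => if v y ≤ t then v y else 0 with hv'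
  have hv'm : Measurable v' := Measurable.ite (measurableSet_le hv measurable_const) hv measurable_const
  have hv'0 : ∀ y, 0 ≤ v' y := fun y => by simp only [hv']; split_ifs; exacts [h0 y, le_rfl]
  have hv'le : ∀ y, v' y ≤ v y := fun y => by simp only [hv']; split_ifs; exacts [le_rfl, h0 y]
  have hv't : ∀ y, v' y ≤ t := fun y => by simp only [hv']; split_ifs with h; exacts [h, hx.le]
  have hkm : Measurable (fun q : ℝ × EuclideanSpace ℝ (Fin (k+2)) => hk (k+2) q.1 (q.2 - x)) := by unfold hk; fun_prop
  have hkmb : ∀ b, Measurable (fun y : EuclideanSpace ℝ (Fin (k+2)) => hk (k+2) b (y - x)) := fun b => by unfold hk; fun_prop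
  have q1 : ∀ b, 0 < b → ∫⁻ y, ENNReal.ofReal (hk (k+2) b (y - x)) * ENNReal.ofReal (v' y) ≤ ENNReal.ofReal t := by
    intro b hb
    calc _ ≤ ∫⁻ y, ENNReal.ofReal (hk (k+2) b (y - x)) * ENNReal.ofReal t :=
          lintegral_mono fun y => mul_le_mul' le_rfl (ENNReal.ofReal_le_ofReal (hv't y))
      _ = _ := by rw [lintegral_mul_const' _ _ ENNReal.ofReal_ne_top, hk_one hb, one_mul]
  have q2 : ∀ b, 0 < b → ∫⁻ y, ENNReal.ofReal (hk (k+2) b (y - x)) * ENNReal.ofReal (v' y) ≤ ENNReal.ofReal (M * N * b^(-(k:ℝ)/4 - 1)) := by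
    intro b hb
    calc _ ≤ ∫⁻ y, ((fun y => ENNReal.ofReal (hk (k+2) b (y - x))) * (fun y => ENNReal.ofReal (v y))) y :=
          lintegral_mono fun y => mul_le_mul' le_rfl (ENNReal.ofReal_le_ofReal (hv'le y))
      _ ≤ _ := ENNReal.lintegral_mul_le_Lp_mul_Lq volume hconj (hkmb b).ennreal_ofReal.aemeasurable hv.ennreal_ofReal.aemeasurable
      _ = _ := by
        rw [hM b hb x, hNe, ← ENNReal.ofReal_mul (by positivity)]
        congr 1; ring
  set R := t ^ (-4/((k:ℝ)+4)) with hR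
  have hR0 : 0 < R := by positivity
  have eg : ∫⁻ y, ENNReal.ofReal (greenKernel (k+2) (y - x)) * ENNReal.ofReal (v' y)
      = ENNReal.ofReal (1/(4*π^2)) * ∫⁻ b in Set.Ioi (0:ℝ), ∫⁻ y, ENNReal.ofReal (hk (k+2) b (y - x)) * ENNReal.ofReal (v' y) := by
    rw [lintegral_lintegral_swap, ← lintegral_const_mul' _ _ ENNReal.ofReal_ne_top]
    · refine lintegral_congr_ae ?_
      have : ∀ᵐ y, y ≠ x := by simp [ae_iff, measure_singleton]
      filter_upwards [this] with y hy
      rw [lintegral_mul_const' _ _ ENNReal.ofReal_ne_top, ← mul_assoc]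
      congr 1
      exact (heat_green hk1 (sub_ne_zero.mpr hy)).symm
    · exact (hkm.ennreal_ofReal.mul (hv'm.comp measurable_snd).ennreal_ofReal).aemeasurable
  rw [eg, mul_assoc, ENNReal.ofReal_mul (by positivity)]
  refine mul_le_mul' le_rfl ?_
  have hsplit : Set.Ioi (0:ℝ) = Set.Ioc 0 R ∪ Set.Ioi R := (Set.Ioc_union_Ioi_eq_Ioi hR0.le).symm
  have ea : t * R = t ^ ((k:ℝ)/(k+4)) := by
    rw [hR]; nth_rewrite 1 [← Real.rpow_one t]; rw [← Real.rpow_add hx]; congr 1; field_simp; ring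
  have eb : R ^ (-(k:ℝ)/4) = t ^ ((k:ℝ)/(k+4)) := by
    rw [hR, ← Real.rpow_mul hx.le]; congr 1; field_simp
  calc _ ≤ (∫⁻ b in Set.Ioc (0:ℝ) R, ∫⁻ y, ENNReal.ofReal (hk (k+2) b (y - x)) * ENNReal.ofReal (v' y)) + ∫⁻ b in Set.Ioi R, ∫⁻ y, ENNReal.ofReal (hk (k+2) b (y - x)) * ENNReal.ofReal (v' y) := by
        rw [hsplit]; exact lintegral_union_le _ _ _
    _ ≤ (∫⁻ b in Set.Ioc (0:ℝ) R, ENNReal.ofReal t) + ∫⁻ b in Set.Ioi R, ENNReal.ofReal (M * N * b^(-(k:ℝ)/4 - 1)) := by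
        refine add_le_add ?_ ?_
        · exact setLIntegral_mono' measurableSet_Ioc fun b hb => q1 b hb.1
        · exact setLIntegral_mono' measurableSet_Ioi fun b hb => q2 b (hR0.trans hb)
    _ = ENNReal.ofReal (t * R) + ENNReal.ofReal (M * N * (4/k * R ^ (-(k:ℝ)/4))) := by
        congr 1
        · rw [setLIntegral_const, Real.volume_Ioc, ← ENNReal.ofReal_mul hx.le, sub_zero]
        · have hlt : -(k:ℝ)/4 - 1 < -1 := by
            have : 0 < (k:ℝ)/4 := by positivity
            linarith [neg_div (4:ℝ) (k:ℝ)]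
          have hIntg := integrableOn_Ioi_rpow_of_lt hlt hR0
          rw [← ofReal_integral_eq_lintegral_ofReal (hIntg.const_mul _)]
          · rw [integral_const_mul, integral_Ioi_rpow_of_lt hlt hR0]
            congr 2
            rw [sub_add_cancel]; field_simp
          · filter_upwards [ae_restrict_mem measurableSet_Ioi] with b hb
            have : 0 < b := hR0.trans hb
            positivity
    _ = _ := by
        rw [ea, eb, ← ENNReal.ofReal_add (by positivity) (by positivity)]
        congr 1; ring

lemma green_nonneg {k : ℕ} (z : EuclideanSpace ℝ (Fin (k+2))) : 0 ≤ greenKernel (k+2) z := by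
  unfold greenKernel sphereArea
  have : 0 < Real.Gamma (((k+2:ℕ):ℝ)/2) := Real.Gamma_pos_of_pos (by positivity)
  have h2 : 0 ≤ ((k+2:ℕ):ℝ) - 2 := by push_cast; simp
  positivity

lemma green_meas {n : ℕ} : Measurable (greenKernel n) := by unfold greenKernel; fun_prop

lemma green_symm {n : ℕ} (x y : EuclideanSpace ℝ (Fin n)) : greenKernel n (x - y) = greenKernel n (y - x) := by
  unfold greenKernel; rw [norm_sub_rev]

lemma energy_fin {k : ℕ} (hk1 : 1 ≤ k) {v : EuclideanSpace ℝ (Fin (k+2)) → ℝ} (hv : Measurable v) (h0 : ∀ x, 0 ≤ v x)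
    (hL : Integrable fun x => v x ^ (2*((k:ℝ)+2)/(k+4))) : energy (k+2) v < ∞ := by
  have hk0 : (0:ℝ) < k := by exact_mod_cast hk1
  obtain ⟨D, hD0, hD⟩ := inner_bd hk1 hv h0 hL
  have hgm := green_meas (n := k+2)
  set F : EuclideanSpace ℝ (Fin (k+2)) → EuclideanSpace ℝ (Fin (k+2)) → ℝ≥0∞ := fun x y =>
    ENNReal.ofReal (v x) * (ENNReal.ofReal (greenKernel (k+2) (y - x)) * ENNReal.ofReal (if v y ≤ v x then v y else 0)) with hF
  have hvm : Measurable (fun q : EuclideanSpace ℝ (Fin (k+2)) × EuclideanSpace ℝ (Fin (k+2)) => if v q.2 ≤ v q.1 then v q.2 else 0) :=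
    Measurable.ite (measurableSet_le (by fun_prop) (by fun_prop)) (by fun_prop) measurable_const
  have hFm : Measurable (Function.uncurry F) := by
    unfold Function.uncurry
    simp only [hF]
    fun_prop
  have hle : ∀ x y, ENNReal.ofReal (v x) * (ENNReal.ofReal (greenKernel (k+2) (y - x)) * ENNReal.ofReal (v y)) ≤ F x y + F y x := by
    intro x y
    rcases le_total (v y) (v x) with h | h
    · refine le_add_right ?_
      simp only [hF, if_pos h]; exact le_rfl
    · refine le_add_left ?_
      simp only [hF, if_pos h]
      rw [green_symm]
      exact le_of_eq (by ring)
  have hone : ∫⁻ x, ∫⁻ y, F x y < ∞ := by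
    calc _ ≤ ∫⁻ x, ENNReal.ofReal (D * v x ^ (2*((k:ℝ)+2)/(k+4))) := by
          refine lintegral_mono fun x => ?_
          simp only [hF]
          rw [lintegral_const_mul' _ _ ENNReal.ofReal_ne_top]
          rcases (h0 x).eq_or_lt with h | h
          · rw [← h]; simp
          · refine (mul_le_mul' le_rfl (hD x h)).trans (le_of_eq ?_)
            rw [← ENNReal.ofReal_mul (h0 x)]
            congr 1
            rw [show 2*((k:ℝ)+2)/(k+4) = 1 + k/(k+4) by field_simp; ring, Real.rpow_add h, Real.rpow_one]
            ring
      _ < ∞ := (hL.const_mul D).lintegral_lt_top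
  calc energy (k+2) v ≤ ∫⁻ x, ∫⁻ y, (F x y + F y x) := lintegral_mono fun x => lintegral_mono fun y => hle x y
    _ = (∫⁻ x, ∫⁻ y, F x y) + ∫⁻ x, ∫⁻ y, F y x := by
        have hFm2 : Measurable fun x => ∫⁻ y, F x y := hFm.lintegral_prod_right'
        rw [← lintegral_add_left hFm2]
        refine lintegral_congr fun x => ?_
        exact lintegral_add_left (hFm.comp (measurable_const.prodMk measurable_id)) _
    _ = (∫⁻ x, ∫⁻ y, F x y) + ∫⁻ x, ∫⁻ y, F x y := by
        congr 1
        exact lintegral_lintegral_swap (hFm.comp measurable_swap).aemeasurable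
    _ < ∞ := ENNReal.add_lt_top.mpr ⟨hone, hone⟩

/-- the Bochner energy is the extended energy -/
lemma energy_eq {k : ℕ} (hk1 : 1 ≤ k) {v : EuclideanSpace ℝ (Fin (k+2)) → ℝ} (hv : Measurable v) (h0 : ∀ x, 0 ≤ v x)
    (hL : Integrable fun x => v x ^ (2*((k:ℝ)+2)/(k+4))) :
    energy (k+2) v = ENNReal.ofReal (∫ x, v x * invLap (k+2) v x) := by
  have hfin := energy_fin hk1 hv h0 hL
  have hgm := green_meas (n := k+2)
  have hgn := green_nonneg (k := k)
  set f : EuclideanSpace ℝ (Fin (k+2)) → ℝ≥0∞ := fun x => ∫⁻ y, ENNReal.ofReal (v x) * (ENNReal.ofReal (greenKernel (k+2) (y - x)) * ENNReal.ofReal (v y)) with hf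
  have hfm : Measurable f := by
    refine Measurable.lintegral_prod_right' (f := fun q : EuclideanSpace ℝ (Fin (k+2)) × EuclideanSpace ℝ (Fin (k+2)) => ENNReal.ofReal (v q.1) * (ENNReal.ofReal (greenKernel (k+2) (q.2 - q.1)) * ENNReal.ofReal (v q.2))) ?_
    fun_prop
  have hx : ∀ x, v x * invLap (k+2) v x = (f x).toReal := by
    intro x
    simp only [hf]
    rw [lintegral_const_mul' _ _ ENNReal.ofReal_ne_top, ENNReal.toReal_mul, ENNReal.toReal_ofReal (h0 x)]
    congr 1
    unfold invLap
    rw [integral_eq_lintegral_of_nonneg_ae (Filter.Eventually.of_forall fun y => mul_nonneg (hgn _) (h0 y)) (Measurable.aestronglyMeasurable (by fun_prop))]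
    congr 1
    refine lintegral_congr fun y => ?_
    rw [ENNReal.ofReal_mul (hgn _), green_symm]
  simp_rw [hx]
  rw [integral_toReal hfm.aemeasurable (ae_lt_top hfm hfin.ne)]
  exact (ENNReal.ofReal_toReal hfin.ne).symm

end ISP


namespace ISP
open scoped ENNReal

lemma final_real {C h x : ℝ} (hC0 : 0 < C) (hx : 0 ≤ x) (h1 : h ≤ 1) (hA : h ≤ C * x) (hB : h * (1 + x) ≤ x) :
    h ≤ √(C^2 + 2*C*x) - C := by
  have hs : 0 ≤ √(C^2+2*C*x) := Real.sqrt_nonneg _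
  suffices h + C ≤ √(C^2 + 2*C*x) by linarith
  rcases le_total h 0 with hn | hn
  · have : C ≤ √(C^2 + 2*C*x) := Real.le_sqrt_of_sq_le (by nlinarith [mul_nonneg hC0.le hx])
    linarith
  · refine Real.le_sqrt_of_sq_le ?_
    rcases le_total C (1/2) with hc | hc
    · nlinarith [mul_nonneg hn (sub_nonneg.mpr h1)]
    · have : h ≤ x := by nlinarith [mul_nonneg hn hx]
      nlinarith [mul_nonneg hn (sub_nonneg.mpr this), mul_nonneg (sub_nonneg.mpr hc) (sub_nonneg.mpr this)]

lemma final_alg {C a e S T I : ℝ} (hC0 : 0 < C) (ha : 0 < a) (he : 0 < e) (hS : 0 < S) (hI : 0 ≤ I)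
    (h1 : a ≤ S * T) (h2 : a^2 * e ≤ T * I) (h3 : S * (a * e) - I ≤ C * S * e * (S * T - a)) :
    0 ≤ I - S * (a * e) + S * (a * e) * (√(C^2 + 2 * C * (a⁻¹ * (S * T - a))) - C) := by
  set x := a⁻¹ * (S * T - a) with hx
  have hx0 : 0 ≤ x := mul_nonneg (by positivity) (by linarith)
  have hax : a * x = S * T - a := by rw [hx]; field_simp
  have hB : 0 < S * (a * e) := by positivity
  set B := S * (a * e) with hBd
  have k2 : B ≤ (1 + x) * I := by
    have : a * B ≤ a * ((1+x) * I) := by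
      calc a * B = S * (a^2 * e) := by rw [hBd]; ring
        _ ≤ S * (T * I) := mul_le_mul_of_nonneg_left h2 hS.le
        _ = (a + a * x) * I := by rw [hax]; ring
        _ = _ := by ring
    exact le_of_mul_le_mul_left this ha
  have k3 : B - I ≤ C * (B * x) := by
    calc _ ≤ _ := h3
      _ = C * S * e * (a * x) := by rw [hax]
      _ = _ := by rw [hBd]; ring
  have key := final_real (h := 1 - I / B) hC0 hx0 (by have := div_nonneg hI hB.le; linarith)
    (by rw [sub_le_iff_le_add, ← sub_le_iff_le_add', le_div_iff₀ hB]; linarith)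
    (by
      have : 1 ≤ (1 + x) * (I / B) := by rw [← mul_div_assoc, le_div_iff₀ hB]; linarith
      nlinarith)
  have : B * (1 - I/B) ≤ B * (√(C^2+2*C*x) - C) := mul_le_mul_of_nonneg_left key hB.le
  have e2 : B * (1 - I/B) = B - I := by field_simp
  linarith

lemma S_pos {k : ℕ} (hk : 1 ≤ k) : 0 < sobolevConst (k+2) := by
  have hk0 : (0:ℝ) < k := by exact_mod_cast hk
  unfold sobolevConst
  push_cast
  have g1 : 0 < Real.Gamma ((k:ℝ)+2) := Real.Gamma_pos_of_pos (by positivity)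
  have g2 : 0 < Real.Gamma (((k:ℝ)+2)/2) := Real.Gamma_pos_of_pos (by positivity)
  rw [add_sub_cancel_right]
  positivity

lemma sob_D {k : ℕ} (hk : 1 ≤ k) {u : EuclideanSpace ℝ (Fin (k+2)) → ℝ} (hd : Differentiable ℝ u) (h0 : ∀ x, 0 ≤ u x)
    (hi : Integrable fun x => ‖fderiv ℝ u x‖^2) (hL : Integrable fun x => u x ^ (2*((k:ℝ)+2)/k)) :
    (∫ x, u x ^ (2*((k:ℝ)+2)/k)) ^ ((k:ℝ)/(k+2)) ≤ sobolevConst (k+2) * ∫ x, ‖fderiv ℝ u x‖^2 := by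
  have hk0 : (0:ℝ) < k := by exact_mod_cast hk
  have hS := S_pos hk
  have hT : ∀ φ : EuclideanSpace ℝ (Fin (k+2)) → ℝ, 0 ≤ ∫ x, ‖fderiv ℝ φ x‖^2 := fun φ => integral_nonneg fun x => by positivity
  have h := ext_D hk (μ := volume) (p := 2*((k:ℝ)+2)/k) (by positivity) (A := sobolevConst (k+2) ^ (((k:ℝ)+2)/k)) (c := ((k:ℝ)+2)/k) (by positivity) (by positivity)
    (fun φ hφ hcs hφ0 => by
      have hs := sob_smooth' hk hφ hcs hφ0
      have hc : Continuous fun x => φ x ^ (2*((k:ℝ)+2)/k) := hφ.continuous.rpow_const fun x => Or.inr (by positivity)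
      have hIntg : Integrable fun x => φ x ^ (2*((k:ℝ)+2)/k) :=
        hc.integrable_of_hasCompactSupport (hcs.comp_left (g := fun r : ℝ => r ^ (2*((k:ℝ)+2)/k)) (Real.zero_rpow (by positivity)))
      have hP : 0 ≤ ∫ x, φ x ^ (2*((k:ℝ)+2)/k) := integral_nonneg fun x => Real.rpow_nonneg (hφ0 x) _
      rw [← ofReal_integral_eq_lintegral_ofReal hIntg (Filter.Eventually.of_forall fun x => Real.rpow_nonneg (hφ0 x) _)]
      refine ENNReal.ofReal_le_ofReal ?_
      rw [← Real.mul_rpow hS.le (hT φ)]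
      have := Real.rpow_le_rpow (Real.rpow_nonneg hP _) hs (show 0 ≤ ((k:ℝ)+2)/k by positivity)
      rwa [← Real.rpow_mul hP, show (k:ℝ)/(k+2) * ((k+2)/k) = 1 by field_simp, Real.rpow_one] at this)
    hd h0 hi hL
  have hP : 0 ≤ ∫ x, u x ^ (2*((k:ℝ)+2)/k) := integral_nonneg fun x => Real.rpow_nonneg (h0 x) _
  rw [← ofReal_integral_eq_lintegral_ofReal hL (Filter.Eventually.of_forall fun x => Real.rpow_nonneg (h0 x) _),
    ← Real.mul_rpow hS.le (hT u), ENNReal.ofReal_le_ofReal_iff (Real.rpow_nonneg (mul_nonneg hS.le (hT u)) _)] at h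
  have := Real.rpow_le_rpow hP h (show 0 ≤ (k:ℝ)/((k:ℝ)+2) by positivity)
  rwa [← Real.rpow_mul (mul_nonneg hS.le (hT u)), show ((k:ℝ)+2)/k * (k/(k+2)) = 1 by field_simp, Real.rpow_one] at this

lemma pow_q {k : ℕ} (hk : 1 ≤ k) {r : ℝ} (hr : 0 ≤ r) : (r ^ (((k:ℝ)+4)/k)) ^ (2*((k:ℝ)+2)/(k+4)) = r ^ (2*((k:ℝ)+2)/k) := by
  have hk0 : (0:ℝ) < k := by exact_mod_cast hk
  rw [← Real.rpow_mul hr]; congr 1; field_simp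

lemma dual_D {k : ℕ} (hk : 1 ≤ k) {u : EuclideanSpace ℝ (Fin (k+2)) → ℝ} (hd : Differentiable ℝ u) (h0 : ∀ x, 0 ≤ u x)
    (hi : Integrable fun x => ‖fderiv ℝ u x‖^2) (hL : Integrable fun x => u x ^ (2*((k:ℝ)+2)/k)) :
    (∫ x, u x ^ (2*((k:ℝ)+2)/k)) ^ 2 ≤ (∫ x, ‖fderiv ℝ u x‖^2) * ∫ x, u x ^ (((k:ℝ)+4)/k) * invLap (k+2) (fun y => u y ^ (((k:ℝ)+4)/k)) x := by
  have hk0 : (0:ℝ) < k := by exact_mod_cast hk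
  set v : EuclideanSpace ℝ (Fin (k+2)) → ℝ := fun x => u x ^ (((k:ℝ)+4)/k) with hv
  have hvc : Continuous v := hd.continuous.rpow_const fun x => Or.inr (by positivity)
  have hv0 : ∀ x, 0 ≤ v x := fun x => Real.rpow_nonneg (h0 x) _
  have hvL : Integrable fun x => v x ^ (2*((k:ℝ)+2)/(k+4)) := by
    simp only [hv]
    simp_rw [fun x => pow_q hk (h0 x)]; exact hL
  have hE := energy_eq hk hvc.measurable hv0 hvL
  set I := ∫ x, v x * invLap (k+2) v x with hI
  have hI0 : 0 ≤ I := integral_nonneg fun x => mul_nonneg (hv0 x) (integral_nonneg fun y => mul_nonneg (green_nonneg _) (hv0 y))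
  have hT : ∀ φ : EuclideanSpace ℝ (Fin (k+2)) → ℝ, 0 ≤ ∫ x, ‖fderiv ℝ φ x‖^2 := fun φ => integral_nonneg fun x => by positivity
  have hwd : ∀ {g : EuclideanSpace ℝ (Fin (k+2)) → ℝ}, Continuous g → (∀ x, 0 ≤ g x) → ∫⁻ x, ENNReal.ofReal (g x ^ (1:ℝ)) ∂(volume.withDensity fun x => ENNReal.ofReal (v x)) = ∫⁻ x, ENNReal.ofReal (g x * v x) := by
    intro g hg hg0
    rw [lintegral_withDensity_eq_lintegral_mul _ hvc.measurable.ennreal_ofReal (by simp only [Real.rpow_one]; exact hg.measurable.ennreal_ofReal)]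
    refine lintegral_congr fun x => ?_
    simp only [Pi.mul_apply, Real.rpow_one]
    rw [ENNReal.ofReal_mul (hg0 x), mul_comm]
  have h := ext_D hk (μ := volume.withDensity fun x => ENNReal.ofReal (v x)) (p := 1) (by positivity) (A := I ^ (1/2:ℝ)) (c := 1/2) (by positivity) (by positivity)
    (fun φ hφ hcs hφ0 => by
      rw [hwd hφ.continuous hφ0]
      refine (dual_cont hk hvc hv0 hφ hcs hφ0).trans (le_of_eq ?_)
      rw [hE, ENNReal.ofReal_rpow_of_nonneg (hT φ) (by norm_num), ENNReal.ofReal_rpow_of_nonneg hI0 (by norm_num), ← ENNReal.ofReal_mul (by have := hT φ; positivity), mul_comm])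
    hd h0 hi hL
  rw [hwd hd.continuous h0] at h
  have huv : ∀ x, u x * v x = u x ^ (2*((k:ℝ)+2)/k) := by
    intro x
    rcases (h0 x).eq_or_lt with h | h
    · rw [← h, zero_mul, Real.zero_rpow (by positivity)]
    · simp only [hv]
      nth_rewrite 1 [← Real.rpow_one (u x)]
      rw [← Real.rpow_add h]; congr 1; field_simp; ring
  simp_rw [huv] at h
  have hTu := hT u
  rw [← ofReal_integral_eq_lintegral_ofReal hL (Filter.Eventually.of_forall fun x => Real.rpow_nonneg (h0 x) _),
    ENNReal.ofReal_le_ofReal_iff (by positivity)] at h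
  have hP : 0 ≤ ∫ x, u x ^ (2*((k:ℝ)+2)/k) := integral_nonneg fun x => Real.rpow_nonneg (h0 x) _
  calc _ ≤ (I ^ (1/2:ℝ) * (∫ x, ‖fderiv ℝ u x‖^2) ^ (1/2:ℝ))^2 := pow_le_pow_left₀ hP h 2
    _ = _ := by
      rw [← Real.sqrt_eq_rpow, ← Real.sqrt_eq_rpow, mul_pow, Real.sq_sqrt hI0, Real.sq_sqrt hTu, mul_comm]

lemma main_k {k : ℕ} (hk : 1 ≤ k) {C N T I S : ℝ} (hC0 : 0 < C) (hN : 0 ≤ N) (hI : 0 ≤ I) (hS : 0 < S)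
    (h1 : N ^ ((k:ℝ)/(k+2)) ≤ S * T) (h2 : N^2 ≤ T * I)
    (h3 : S * N ^ (((k:ℝ)+4)/(k+2)) - I ≤ C * S * N ^ ((4:ℝ)/(k+2)) * (S * T - N ^ ((k:ℝ)/(k+2)))) :
    0 ≤ I - S * N ^ (((k:ℝ)+4)/(k+2)) + S * N ^ (((k:ℝ)+4)/(k+2)) * (√(C^2 + 2 * C * (N ^ (-((k:ℝ)/(k+2))) * (S * T - N ^ ((k:ℝ)/(k+2))))) - C) := by
  have hk0 : (0:ℝ) < k := by exact_mod_cast hk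
  rcases hN.eq_or_lt with h | h
  · have e : N ^ (((k:ℝ)+4)/(k+2)) = 0 := by rw [← h]; exact Real.zero_rpow (by positivity)
    rw [e]; simpa using hI
  have e1 : N ^ (((k:ℝ)+4)/(k+2)) = N ^ ((k:ℝ)/(k+2)) * N ^ ((4:ℝ)/(k+2)) := by
    rw [← Real.rpow_add h]; congr 1; ring
  have e2 : N^2 = (N ^ ((k:ℝ)/(k+2)))^2 * N ^ ((4:ℝ)/(k+2)) := by
    rw [← Real.rpow_natCast, ← Real.rpow_natCast, ← Real.rpow_mul hN, ← Real.rpow_add h]; congr 1; push_cast; field_simp; ring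
  rw [e1] at h3 ⊢
  rw [e2] at h2
  rw [Real.rpow_neg hN]
  exact final_alg hC0 (by positivity) (by positivity) hS hI h1 h2 h3

end ISP

theorem improved_sobolev_phi (d : ℕ) (hd : 3 ≤ d) (C : ℝ) (hC0 : 0 < C) (hC1 : C ≤ 1)
    (hineq : ∀ u : EuclideanSpace ℝ (Fin d) → ℝ, (∀ x, 0 ≤ u x) → MemD12 d u →
      sobolevConst d *
          lpNorm' (2 * (d : ℝ) / ((d : ℝ) + 2))
            (fun x => u x ^ (((d : ℝ) + 2) / ((d : ℝ) - 2))) ^ (2 : ℝ) -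
        (∫ x, u x ^ (((d : ℝ) + 2) / ((d : ℝ) - 2)) *
          invLap d (fun y => u y ^ (((d : ℝ) + 2) / ((d : ℝ) - 2))) x) ≤
      C * sobolevConst d *
        lpNorm' (2 * (d : ℝ) / ((d : ℝ) - 2)) u ^ ((8 : ℝ) / ((d : ℝ) - 2)) *
        (sobolevConst d * (∫ x, ‖gradient u x‖ ^ 2) -
          lpNorm' (2 * (d : ℝ) / ((d : ℝ) - 2)) u ^ (2 : ℝ)))
    (u : EuclideanSpace ℝ (Fin d) → ℝ) (hu0 : ∀ x, 0 ≤ u x) (hu : MemD12 d u) :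
    0 ≤ Hfun d (fun x => u x ^ (((d : ℝ) + 2) / ((d : ℝ) - 2))) +
      sobolevConst d *
        Jfun d (fun x => u x ^ (((d : ℝ) + 2) / ((d : ℝ) - 2))) ^ (1 + 2 / (d : ℝ)) *
        (Real.sqrt (C ^ 2 + 2 * C *
          (Jfun d (fun x => u x ^ (((d : ℝ) + 2) / ((d : ℝ) - 2))) ^ (2 / (d : ℝ) - 1) *
            (sobolevConst d * (∫ x, ‖gradient u x‖ ^ 2) -
              lpNorm' (2 * (d : ℝ) / ((d : ℝ) - 2)) u ^ (2 : ℝ)))) - C) := by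
  obtain ⟨k, rfl⟩ : ∃ k, d = k + 2 := ⟨d - 2, by omega⟩
  have hk : 1 ≤ k := by omega
  have hk0 : (0:ℝ) < k := by exact_mod_cast hk
  have hI3 := hineq u hu0 hu
  obtain ⟨hdf, hgi, hLi⟩ := hu
  have x1 : ((k+2:ℕ):ℝ) + 2 = k + 4 := by push_cast; ring
  have x2 : ((k+2:ℕ):ℝ) - 2 = k := by push_cast; ring
  have x3 : ((k+2:ℕ):ℝ) = k + 2 := by push_cast; ring
  simp only [x1, x2] at hI3 hLi ⊢
  simp only [x3] at hI3 hLi ⊢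
  have hgr : ∀ x, ‖gradient u x‖ = ‖fderiv ℝ u x‖ := fun x => by
    unfold gradient; exact LinearIsometryEquiv.norm_map _ _
  simp only [hgr] at hgi hI3 ⊢
  simp only [fun x => abs_of_nonneg (hu0 x)] at hLi
  have hq0 : ∀ x, 0 ≤ u x ^ (((k:ℝ)+4)/k) := fun x => Real.rpow_nonneg (hu0 x) _
  have hN0 : 0 ≤ ∫ x, u x ^ (2*((k:ℝ)+2)/k) := integral_nonneg fun x => Real.rpow_nonneg (hu0 x) _
  have n1 : ∀ s : ℝ, lpNorm' (2*((k:ℝ)+2)/k) u ^ s = (∫ x, u x ^ (2*((k:ℝ)+2)/k)) ^ (k/(2*((k:ℝ)+2)) * s) := fun s => by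
    unfold lpNorm'
    simp only [fun x => abs_of_nonneg (hu0 x)]
    rw [← Real.rpow_mul hN0, one_div_div]
  have n2 : lpNorm' (2*((k:ℝ)+2)/(k+4)) (fun x => u x ^ (((k:ℝ)+4)/k)) ^ (2:ℝ) = (∫ x, u x ^ (2*((k:ℝ)+2)/k)) ^ (((k:ℝ)+4)/(k+2)) := by
    unfold lpNorm'
    simp only [fun x => abs_of_nonneg (hq0 x), fun x => ISP.pow_q hk (hu0 x)]
    rw [← Real.rpow_mul hN0]
    congr 1; field_simp
  have n3 : Jfun (k+2) (fun x => u x ^ (((k:ℝ)+4)/k)) = ∫ x, u x ^ (2*((k:ℝ)+2)/k) := by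
    unfold Jfun
    simp only [x1]
    simp only [x3, fun x => ISP.pow_q hk (hu0 x)]
  unfold Hfun
  simp only [x1]
  simp only [x3]
  rw [n3, n2, n1, show (k:ℝ)/(2*(k+2)) * 2 = k/(k+2) by field_simp, show 1 + 2/((k:ℝ)+2) = (k+4)/(k+2) by field_simp; ring,
    show 2/((k:ℝ)+2) - 1 = -(k/(k+2)) by field_simp; ring]
  rw [n2, n1, n1, show (k:ℝ)/(2*(k+2)) * 2 = k/(k+2) by field_simp, show (k:ℝ)/(2*(k+2)) * (8/k) = 4/(k+2) by field_simp; norm_num] at hI3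
  exact ISP.main_k hk hC0 hN0
    (integral_nonneg fun x => mul_nonneg (hq0 x) (integral_nonneg fun y => mul_nonneg (ISP.green_nonneg _) (hq0 y)))
    (ISP.S_pos hk) (ISP.sob_D hk hdf hu0 hgi hLi) (ISP.dual_D hk hdf hu0 hgi hLi) hI3
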